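/- Let −3 < γ ≤ 1 and k ≥ 4. Then there exists a constant C_k > 0 such that for all measurable f : ℝ³ → ℝ for which all integrals below converge absolutely, ∫_{ℝ³} Q(μ, f)(v) f(v) ⟨v⟩^{2k} dv ≤ −‖b(cos θ)(1 − cos^{k−(3+γ)/2}(θ/2))‖_{L¹_θ} · ‖f‖²_{L²_{k+γ/2,*}} + C_k ‖f‖²_{L²_{k+γ/2−1/2}}. -/

import Mathlib

/-!
The loss part of `∫ Q(μ, f) f ⟨v⟩^{2k}` is exactly `‖b‖_{L¹_θ}` times the star norm, so everything
rests on bounding the gain part by `‖b cos^{k-(3+γ)/2}(θ/2)‖_{L¹_θ}` times the star norm plus a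
lower-order term.

*Weights.* Since `|v - v*'| = cos(θ/2) |v - v*|` and `|v' - v*'| = |v - v*|`, one has
`⟨v⟩ ≤ cos(θ/2) ⟨v'⟩ + 3 ⟨v*'⟩` (`jap_le_post`). Raising to the power `k` gives
`⟨v⟩^{2k} ≤ cos^k(θ/2) ⟨v⟩^k ⟨v'⟩^k` plus an error which loses half a power of both `⟨v⟩` and `⟨v'⟩`
at the price of a power of `⟨v*'⟩`, harmless against `μ(v*')` (`weight_split`). The product
`|f(v) f(v')|` is split by the arithmetic-geometric inequality with the weights
`cos^{±(3+γ)/2}(θ/2)` (`weighted_amgm`); these make the two resulting main terms carry the same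
angular constant.

*Changes of variables.* Each term is of the form kernel `× M(v*') F(v)` or `× M(v*') F(v')`.
For the first, `v* ↦ v*'` at fixed `v` and `σ` is replaced by the following argument: the map
`r ↦ ½(r + |r|σ)` commutes with rotations acting on `(r, σ)` and scales lengths by `cos(θ/2)`, so
averaging the test function over the orthogonal group reduces the identity to radial functions, where
it is a dilation for each deviation angle (`angular_formula`). The second follows from translation
invariance and the same formula applied to `r ↦ |r|σ`. The results are `gain_at_v`, with Jacobian
factor `cos^{-3-γ}(θ/2)`, and `gain_at_vP`, with factor `1`. As `b` is supported where
`cos(θ/2) ≥ 2^{-1/2}`, all the angular constants are finite.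

*Error term.* The convolution of `|·|^γ` with `μ ⟨·⟩^{k+1/2}` is `O(⟨v⟩^γ)` because `γ > -3`
(`conv_bound`), which turns the error into `‖f‖²_{L²_{k+γ/2-1/2}}`.
-/

open MeasureTheory Real
open scoped ENNReal RealInnerProductSpace Classical

noncomputable section

/-- velocity space ℝ³ -/
abbrev E3 : Type := EuclideanSpace ℝ (Fin 3)

/-- the unit sphere 𝕊² ⊆ ℝ³ -/
abbrev S2 : Type := Metric.sphere (0 : E3) 1

/-- surface measure on the unit sphere -/
noncomputable instance : MeasureSpace S2 := ⟨(volume : Measure E3).toSphere⟩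

/-- Japanese bracket ⟨v⟩ = √(1+|v|²). -/
def jap (v : E3) : ℝ := Real.sqrt (1 + ‖v‖ ^ 2)

/-- Post-collision velocity v' = (v+v*)/2 + (|v-v*|/2)σ. -/
def vP (v w : E3) (σ : S2) : E3 := (2⁻¹ : ℝ) • (v + w) + (‖v - w‖ / 2) • (σ : E3)

/-- Post-collision velocity v*' = (v+v*)/2 - (|v-v*|/2)σ. -/
def vsP (v w : E3) (σ : S2) : E3 := (2⁻¹ : ℝ) • (v + w) - (‖v - w‖ / 2) • (σ : E3)

/-- cos θ = ((v-v*)/|v-v*|)·σ. -/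
def cosTheta (v w : E3) (σ : S2) : ℝ := ⟪v - w, (σ : E3)⟫ / ‖v - w‖

/-- sin(θ/2) = √((1-cos θ)/2). -/
def sinHalf (v w : E3) (σ : S2) : ℝ := Real.sqrt ((1 - cosTheta v w σ) / 2)

/-- cos(θ/2) = √((1+cos θ)/2). -/
def cosHalf (v w : E3) (σ : S2) : ℝ := Real.sqrt ((1 + cosTheta v w σ) / 2)

/-- a fixed reference unit direction, used to express rotation-invariant angular integrals -/
def e1 : E3 := EuclideanSpace.single 0 1

/-- cos θ for the deviation angle of σ relative to the fixed direction `e1` -/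
def cos1 (σ : S2) : ℝ := ⟪e1, (σ : E3)⟫

def sinHalf1 (σ : S2) : ℝ := Real.sqrt ((1 - cos1 σ) / 2)

def cosHalf1 (σ : S2) : ℝ := Real.sqrt ((1 + cos1 σ) / 2)

/-- the standard Maxwellian μ(v) = (2π)^{-3/2} e^{-|v|²/2} -/
def maxw (v : E3) : ℝ := (2 * π) ^ (-(3 : ℝ) / 2) * Real.exp (-‖v‖ ^ 2 / 2)

/-- Grad's angular cutoff assumption (A2): `bf` is measurable, nonnegative,
`K ≤ bf ≤ K⁻¹` on `[0,1]` for some `K > 0`, and `bf` vanishes on negatives. -/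
def gradCutoff (bf : ℝ → ℝ) : Prop :=
  Measurable bf ∧ (∀ t, 0 ≤ bf t) ∧
    (∃ K : ℝ, 0 < K ∧ ∀ t ∈ Set.Icc (0 : ℝ) 1, K ≤ bf t ∧ bf t ≤ K⁻¹) ∧
    ∀ t : ℝ, t < 0 → bf t = 0

/-- gain operator Q⁺ -/
def Qgain (γ : ℝ) (bf : ℝ → ℝ) (f g : E3 → ℝ) (v : E3) : ℝ :=
  ∫ w : E3, ∫ σ : S2, ‖v - w‖ ^ γ * bf (cosTheta v w σ) * (f (vsP v w σ) * g (vP v w σ))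

/-- loss operator Q⁻ -/
def Qloss (γ : ℝ) (bf : ℝ → ℝ) (f g : E3 → ℝ) (v : E3) : ℝ :=
  ∫ w : E3, ∫ σ : S2, ‖v - w‖ ^ γ * bf (cosTheta v w σ) * (f w * g v)

/-- the Boltzmann collision operator Q = Q⁺ - Q⁻ -/
def Qcol (γ : ℝ) (bf : ℝ → ℝ) (f g : E3 → ℝ) (v : E3) : ℝ :=
  ∫ w : E3, ∫ σ : S2, ‖v - w‖ ^ γ * bf (cosTheta v w σ) *
    (f (vsP v w σ) * g (vP v w σ) - f w * g v)

/-- collision frequency ν(v) -/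
def nuF (γ : ℝ) (bf : ℝ → ℝ) (v : E3) : ℝ :=
  ∫ w : E3, ∫ σ : S2, ‖v - w‖ ^ γ * bf (cosTheta v w σ) * maxw w

/-- squared weighted norm ‖f‖²_{L²_q} -/
def wSqR (q : ℝ) (f : E3 → ℝ) : ℝ := ∫ v : E3, f v ^ 2 * jap v ^ (2 * q)

/-- weighted norm ‖f‖_{L²_q} -/
def wNorm (q : ℝ) (f : E3 → ℝ) : ℝ := Real.sqrt (wSqR q f)

/-- squared star norm ‖f‖²_{L²_{k+γ/2,*}} = ∫∫ μ(v*)|v-v*|^γ f(v)² ⟨v⟩^{2k} -/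
def starSq (γ k : ℝ) (f : E3 → ℝ) : ℝ :=
  ∫ v : E3, ∫ w : E3, maxw w * ‖v - w‖ ^ γ * f v ^ 2 * jap v ^ (2 * k)

/-- star norm ‖f‖_{L²_{k+γ/2,*}} -/
def starNorm (γ k : ℝ) (f : E3 → ℝ) : ℝ := Real.sqrt (starSq γ k f)

/-- squared exponentially weighted norm ‖f‖²_{L²_{q,a,b}} -/
def expSq (q a b : ℝ) (f : E3 → ℝ) : ℝ :=
  ∫ v : E3, f v ^ 2 * jap v ^ (2 * q) * Real.exp (2 * a * jap v ^ b)

/-- exponentially weighted norm ‖f‖_{L²_{q,a,b}} -/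
def expNorm (q a b : ℝ) (f : E3 → ℝ) : ℝ := Real.sqrt (expSq q a b f)


/-! ### Averaging over the orthogonal group -/

/-- The orthogonal group of `E3`, as a compact topological group. -/
abbrev OG : Type := unitary (E3 →L[ℝ] E3)

instance : MeasurableSpace OG := borel OG
instance : BorelSpace OG := ⟨rfl⟩

instance : ContinuousStar (E3 →L[ℝ] E3) :=
  ⟨(ContinuousLinearMap.adjoint (𝕜 := ℝ) (E := E3) (F := E3)).continuous⟩

instance : CompactSpace OG := by
  have : ProperSpace (E3 →L[ℝ] E3) := FiniteDimensional.proper ℝ _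
  refine (isCompact_iff_compactSpace (s := (unitary (E3 →L[ℝ] E3) : Set (E3 →L[ℝ] E3)))).mp ?_
  refine Metric.isCompact_of_isClosed_isBounded ?_ ?_
  · have : ((unitary (E3 →L[ℝ] E3) : Submonoid _) : Set (E3 →L[ℝ] E3)) =
        {U | star U * U = 1 ∧ U * star U = 1} := by
      ext U; exact Unitary.mem_iff
    rw [this]
    exact (isClosed_eq (by fun_prop) (by fun_prop)).inter (isClosed_eq (by fun_prop) (by fun_prop))
  · refine (Metric.isBounded_closedBall (x := 0) (r := 1)).subset ?_
    intro U hU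
    rw [mem_closedBall_zero_iff]
    refine ContinuousLinearMap.opNorm_le_bound _ zero_le_one fun x => ?_
    have := (Unitary.linearIsometryEquiv ⟨U, hU⟩ : E3 ≃ₗᵢ[ℝ] E3).norm_map x
    rw [one_mul]
    exact this.le

instance : SecondCountableTopology OG := by
  have : ProperSpace (E3 →L[ℝ] E3) := FiniteDimensional.proper ℝ _
  infer_instance

/-- An orthogonal operator as a linear isometry of `E3`. -/
def act (R : OG) : E3 ≃ₗᵢ[ℝ] E3 := Unitary.linearIsometryEquiv R

/-- Normalised Haar measure on the orthogonal group. -/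
def haarO : Measure OG := Measure.haarMeasure ⊤

instance : haarO.IsHaarMeasure := by unfold haarO; infer_instance
instance : IsProbabilityMeasure haarO := ⟨by
  have := Measure.haarMeasure_self (G := OG) (K₀ := ⊤)
  simpa [haarO] using this⟩

/-- The action of a linear isometry on the unit sphere. -/
def rot (e : E3 ≃ₗᵢ[ℝ] E3) (σ : S2) : S2 := ⟨e σ, by
  have := σ.2
  simp only [mem_sphere_zero_iff_norm] at this ⊢
  rw [e.norm_map, this]⟩

lemma measurable_rot (e : E3 ≃ₗᵢ[ℝ] E3) : Measurable (rot e) :=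
  (e.continuous.measurable.comp measurable_subtype_coe).subtype_mk

lemma volume_S2 : (volume : Measure S2) = (volume : Measure E3).toSphere := rfl

instance : IsFiniteMeasure (volume : Measure S2) := by rw [volume_S2]; infer_instance

/-- Linear isometries preserve the surface measure: it is defined through the volume of cones, and
the cone over a rotated set is the rotated cone. -/
lemma measurePreserving_rot (e : E3 ≃ₗᵢ[ℝ] E3) :
    MeasurePreserving (rot e) (volume : Measure S2) volume := by
  refine ⟨measurable_rot e, ?_⟩
  ext s hs
  rw [Measure.map_apply (measurable_rot e) hs, volume_S2,
    Measure.toSphere_apply' _ hs, Measure.toSphere_apply' _ (measurable_rot e hs)]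
  congr 1
  rw [← e.symm.measurePreserving.measure_preimage_equiv (f := e.symm.toMeasurableEquiv)]
  congr 1
  ext x
  simp only [Set.mem_smul, Set.mem_image, Set.mem_preimage]
  constructor
  · rintro ⟨t, ht, y, ⟨z, hz, rfl⟩, h⟩
    refine ⟨t, ht, _, ⟨_, hz, rfl⟩, ?_⟩
    have : e (t • (z : E3)) = x := by rw [h]; exact e.apply_symm_apply x
    rw [← this]
    simp [rot]
  · rintro ⟨t, ht, y, ⟨z, hz, rfl⟩, h⟩
    refine ⟨t, ht, _, ⟨rot e.symm z, ?_, rfl⟩, ?_⟩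
    · have : rot e (rot e.symm z) = z := by
        apply Subtype.ext; simp [rot]
      show rot e (rot e.symm z) ∈ s
      rwa [this]
    · show _ = e.symm x
      rw [← h]; simp [rot]

lemma exists_isometry (x y : E3) (h : ‖x‖ = ‖y‖) : ∃ e : E3 ≃ₗᵢ[ℝ] E3, e x = y :=
  ⟨_, Submodule.reflection_sub h⟩

lemma norm_e1 : ‖e1‖ = 1 := by simp [e1]

lemma measurable_act : Measurable (fun p : OG × E3 => act p.1⁻¹ p.2) := by
  apply Continuous.measurable
  have : (fun p : OG × E3 => act p.1⁻¹ p.2) = fun p => ((p.1⁻¹ : OG) : E3 →L[ℝ] E3) p.2 := rfl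
  rw [this]
  have h1 : Continuous fun p : OG × E3 => ((p.1⁻¹ : OG) : E3 →L[ℝ] E3) :=
    continuous_subtype_val.comp (continuous_inv.comp continuous_fst)
  exact h1.clm_apply continuous_snd

/-- The average of `g` over the orthogonal group. -/
def avg (g : E3 → ℝ≥0∞) (x : E3) : ℝ≥0∞ := ∫⁻ R : OG, g (act R⁻¹ x) ∂haarO

lemma measurable_avg {g : E3 → ℝ≥0∞} (hg : Measurable g) : Measurable (avg g) := by
  have h : Measurable (g ∘ fun p : OG × E3 => act p.1⁻¹ p.2) := hg.comp measurable_act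
  exact Measurable.lintegral_prod_left' (f := fun p : OG × E3 => g (act p.1⁻¹ p.2)) h

lemma avg_isometry (g : E3 → ℝ≥0∞) (e : E3 ≃ₗᵢ[ℝ] E3) (x : E3) : avg g (e x) = avg g x := by
  obtain ⟨S, rfl⟩ : ∃ S, act S = e := ⟨Unitary.linearIsometryEquiv.symm e, by simp [act]⟩
  unfold avg
  rw [← lintegral_mul_left_eq_self (μ := haarO) _ S]
  congr 1
  ext R
  congr 1
  simp [act, mul_inv_rev, map_mul]

-- Unfolding `act` makes the unifier compare operators on `E3`, which is very slow.
attribute [irreducible] act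

/-- The average depends on the norm of the point only, isometries being transitive on spheres. -/
lemma avg_radial (g : E3 → ℝ≥0∞) (x : E3) : avg g x = avg g (‖x‖ • e1) := by
  obtain ⟨e, he⟩ := exists_isometry x (‖x‖ • e1) (by simp [norm_smul, norm_e1])
  rw [← he, avg_isometry]

/-! ### The angular change of variables -/

/-- Cosine of the angle between a relative velocity `r` and `σ`; equal to `0` for `r = 0`. -/
def cosR (r : E3) (σ : S2) : ℝ := ⟪r, (σ : E3)⟫ / ‖r‖

lemma measurable_cosR : Measurable (fun p : E3 × S2 => cosR p.1 p.2) := by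
  unfold cosR
  have : Continuous fun p : E3 × S2 => ⟪p.1, (p.2 : E3)⟫ := by fun_prop
  exact this.measurable.div (by fun_prop)

lemma cosR_rot (e : E3 ≃ₗᵢ[ℝ] E3) (r : E3) (σ : S2) : cosR (e r) (rot e σ) = cosR r σ := by
  simp [cosR, rot]

lemma cosR_e1 (σ : S2) : cosR e1 σ = cos1 σ := by simp [cosR, cos1, norm_e1]

/-- Angular integrals do not depend on the reference direction. -/
lemma lintegral_cosR (F : ℝ → ℝ≥0∞) (hF : Measurable F) (r : E3) (hr : r ≠ 0) :
    ∫⁻ σ : S2, F (cosR r σ) = ∫⁻ σ : S2, F (cos1 σ) := by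
  obtain ⟨e, he⟩ := exists_isometry r (‖r‖ • e1) (by simp [norm_smul, norm_e1])
  have h1 : ∀ σ : S2, cosR r σ = cos1 (rot e σ) := by
    intro σ
    rw [← cosR_rot e, he, ← cosR_e1]
    have : ‖r‖ ≠ 0 := norm_ne_zero_iff.2 hr
    simp only [cosR, norm_smul, norm_e1, inner_smul_left, norm_norm]
    simp
    field_simp
  simp_rw [h1]
  have hm : Measurable fun σ : S2 => F (cos1 σ) := by
    simp_rw [← cosR_e1]
    exact hF.comp (measurable_cosR.comp measurable_prodMk_left)
  exact (measurePreserving_rot e).lintegral_comp hm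

lemma lintegral_scale (c : ℝ) (hc : 0 < c) (g : E3 → ℝ≥0∞) (hg : Measurable g) :
    ∫⁻ r : E3, g (c • r) = ENNReal.ofReal (c ^ (-3 : ℝ)) * ∫⁻ r : E3, g r := by
  have h := Measure.map_addHaar_smul (volume : Measure E3) hc.ne'
  have h2 : ∫⁻ r : E3, g r ∂(Measure.map (c • ·) (volume : Measure E3)) = ∫⁻ r : E3, g (c • r) :=
    lintegral_map hg (measurable_const_smul c)
  rw [← h2, h, lintegral_smul_measure]
  simp only [finrank_euclideanSpace, Fintype.card_fin, smul_eq_mul]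
  congr 2
  rw [abs_of_pos (by positivity), rpow_neg hc.le]
  norm_cast

lemma measurable_act_comp {X : Type*} [MeasurableSpace X] {f : X → OG} {h : X → E3}
    (hf : Measurable f) (hh : Measurable h) : Measurable fun x => act (f x)⁻¹ (h x) := by
  have := measurable_act.comp (hf.prodMk hh)
  exact this

lemma measurable_act_point {g : E3 → ℝ≥0∞} (hg : Measurable g) (x : E3) :
    Measurable fun R : OG => g (act R⁻¹ x) := by
  have h1 : Measurable ((fun p : OG × E3 => act p.1⁻¹ p.2) ∘ fun R : OG => (R, x)) :=
    measurable_act.comp measurable_prodMk_right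
  have h2 : Measurable (g ∘ ((fun p : OG × E3 => act p.1⁻¹ p.2) ∘ fun R : OG => (R, x))) :=
    hg.comp h1
  exact h2

/-- In an integral with rotation-invariant kernel `K` and rotation-equivariant `Ψ`, the test function
may be replaced by its average over the orthogonal group. -/
lemma avg_step (K : E3 × S2 → ℝ≥0∞) (mK : Measurable K)
    (hK : ∀ (e : E3 ≃ₗᵢ[ℝ] E3) r σ, K (e r, rot e σ) = K (r, σ))
    (Ψ : E3 → S2 → E3) (hΨ : Measurable (Function.uncurry Ψ))
    (heq : ∀ (e : E3 ≃ₗᵢ[ℝ] E3) r σ, Ψ (e r) (rot e σ) = e (Ψ r σ))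
    (g : E3 → ℝ≥0∞) (hg : Measurable g) :
    ∫⁻ r : E3, ∫⁻ σ : S2, K (r, σ) * g (Ψ r σ) =
      ∫⁻ r : E3, ∫⁻ σ : S2, K (r, σ) * avg g (Ψ r σ) := by
  have inv1 : ∀ (e : E3 ≃ₗᵢ[ℝ] E3),
      ∫⁻ r : E3, ∫⁻ σ : S2, K (r, σ) * g (e (Ψ r σ)) =
      ∫⁻ r : E3, ∫⁻ σ : S2, K (r, σ) * g (Ψ r σ) := by
    intro e
    have m1 : Measurable fun p : E3 × S2 => K p * g (Ψ p.1 p.2) := mK.mul (hg.comp hΨ)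
    rw [← e.measurePreserving.lintegral_comp
      (f := fun r => ∫⁻ σ : S2, K (r, σ) * g (Ψ r σ)) m1.lintegral_prod_right']
    congr 1; ext r
    rw [← (measurePreserving_rot e).lintegral_comp
      (f := fun σ => K (e r, σ) * g (Ψ (e r) σ)) (m1.comp measurable_prodMk_left)]
    congr 1; ext σ
    rw [heq, hK]
  have h1 : ∫⁻ R : OG, (∫⁻ r : E3, ∫⁻ σ : S2, K (r, σ) * g (act R⁻¹ (Ψ r σ))) ∂haarO =
      ∫⁻ r : E3, ∫⁻ σ : S2, K (r, σ) * g (Ψ r σ) := by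
    simp_rw [inv1]
    simp
  have mact : Measurable fun p : (OG × E3) × S2 => act p.1.1⁻¹ (Ψ p.1.2 p.2) :=
    measurable_act_comp (by fun_prop)
      (hΨ.comp (by fun_prop : Measurable fun p : (OG × E3) × S2 => (p.1.2, p.2)))
  have mK3 : Measurable fun p : (OG × E3) × S2 => K (p.1.2, p.2) := by fun_prop
  have m3 : Measurable fun p : (OG × E3) × S2 =>
      K (p.1.2, p.2) * g (act p.1.1⁻¹ (Ψ p.1.2 p.2)) := mK3.mul (hg.comp mact)
  have m5 : Measurable fun p : OG × E3 =>
      ∫⁻ σ : S2, K (p.2, σ) * g (act p.1⁻¹ (Ψ p.2 σ)) := m3.lintegral_prod_right'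
  rw [← h1, lintegral_lintegral_swap m5.aemeasurable]
  congr 1; ext r
  have m4 : Measurable fun q : OG × S2 => K (r, q.2) * g (act q.1⁻¹ (Ψ r q.2)) :=
    m3.comp (by fun_prop : Measurable fun q : OG × S2 => ((q.1, r), q.2))
  rw [lintegral_lintegral_swap m4.aemeasurable]
  congr 1; ext σ
  rw [avg, lintegral_const_mul]
  exact measurable_act_point hg _

lemma avg_step' (K : E3 → ℝ≥0∞) (mK : Measurable K)
    (hK : ∀ (e : E3 ≃ₗᵢ[ℝ] E3) r, K (e r) = K r)
    (g : E3 → ℝ≥0∞) (hg : Measurable g) :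
    ∫⁻ r : E3, K r * g r = ∫⁻ r : E3, K r * avg g r := by
  have inv2 : ∀ (e : E3 ≃ₗᵢ[ℝ] E3), ∫⁻ r : E3, K r * g (e r) = ∫⁻ r : E3, K r * g r := by
    intro e
    rw [← e.measurePreserving.lintegral_comp (f := fun r => K r * g r) (mK.mul hg)]
    simp_rw [hK]
  have h1 : ∫⁻ R : OG, (∫⁻ r : E3, K r * g (act R⁻¹ r)) ∂haarO = ∫⁻ r : E3, K r * g r := by
    simp_rw [inv2]
    simp
  have m1 : Measurable fun p : OG × E3 => K p.2 * g (act p.1⁻¹ p.2) :=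
    (mK.comp measurable_snd).mul (hg.comp measurable_act)
  rw [← h1, lintegral_lintegral_swap m1.aemeasurable]
  congr 1; ext r
  rw [avg, lintegral_const_mul]
  exact measurable_act_point hg _

lemma measurable_cos1 : Measurable cos1 := by
  have : cos1 = fun σ => cosR e1 σ := by ext; rw [cosR_e1]
  rw [this]; exact measurable_cosR.comp measurable_prodMk_left

/-- The angular formula for radial `G`. Only `|Ψ r σ| = |r| a(cos θ)` matters then, so `Ψ r σ` can be
replaced by `a(cos θ) r` with `θ` measured from a fixed direction, and for each `σ` the integral in
`r` is a dilation by `a`. -/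
lemma angular_radial (γ : ℝ) (H : ℝ → ℝ≥0∞) (hH : Measurable H) (a : ℝ → ℝ)
    (ha : Measurable a) (hpos : ∀ t, H t ≠ 0 → 0 < a t)
    (Ψ : E3 → S2 → E3)
    (hn : ∀ r σ, r ≠ 0 → ‖Ψ r σ‖ = ‖r‖ * a (cosR r σ))
    (G : E3 → ℝ≥0∞) (mavg : Measurable G) (hG : ∀ x, G x = G (‖x‖ • e1)) :
    ∫⁻ r : E3, ∫⁻ σ : S2, ENNReal.ofReal (‖r‖ ^ γ) * H (cosR r σ) * G (Ψ r σ) =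
      (∫⁻ σ : S2, H (cos1 σ) * ENNReal.ofReal (a (cos1 σ) ^ (-3 - γ))) *
        ∫⁻ r : E3, ENNReal.ofReal (‖r‖ ^ γ) * G r := by
  have hcos1 := measurable_cos1
  have mpow : Measurable fun r : E3 => ENNReal.ofReal (‖r‖ ^ γ) := by fun_prop
  have ae0 : ∀ᵐ r : E3, r ≠ 0 :=
    compl_mem_ae_iff.mpr (measure_singleton (0 : E3))
  calc ∫⁻ r : E3, ∫⁻ σ : S2, ENNReal.ofReal (‖r‖ ^ γ) * H (cosR r σ) * G (Ψ r σ)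
      = ∫⁻ r : E3, ∫⁻ σ : S2,
          ENNReal.ofReal (‖r‖ ^ γ) * (H (cos1 σ) * G (a (cos1 σ) • r)) := by
        refine lintegral_congr_ae (ae0.mono fun r hr => ?_)
        have hF : Measurable fun t : ℝ =>
            ENNReal.ofReal (‖r‖ ^ γ) * (H t * G ((‖r‖ * |a t|) • e1)) := by
          refine (hH.mul (mavg.comp ?_)).const_mul _
          fun_prop
        have := lintegral_cosR _ hF r hr
        dsimp only
        convert this using 2
        · ext σ
          rw [hG, hn r σ hr]
          have : ‖r‖ * |a (cosR r σ)| = ‖r‖ * a (cosR r σ) := by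
            have h2 := abs_norm (Ψ r σ)
            rwa [hn r σ hr, abs_mul, abs_norm] at h2
          rw [this, mul_assoc]
        · ext σ
          rw [hG (a (cos1 σ) • r), norm_smul, Real.norm_eq_abs, mul_comm |_|]
    _ = ∫⁻ σ : S2, ∫⁻ r : E3,
          ENNReal.ofReal (‖r‖ ^ γ) * (H (cos1 σ) * G (a (cos1 σ) • r)) := by
        rw [lintegral_lintegral_swap]
        apply Measurable.aemeasurable
        refine (mpow.comp measurable_fst).mul ((hH.comp (hcos1.comp measurable_snd)).mul
          (mavg.comp ?_))
        fun_prop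
    _ = ∫⁻ σ : S2, H (cos1 σ) * ENNReal.ofReal (a (cos1 σ) ^ (-3 - γ)) *
          ∫⁻ r : E3, ENNReal.ofReal (‖r‖ ^ γ) * G r := by
        congr 1; ext σ
        by_cases h0 : H (cos1 σ) = 0
        · simp [h0]
        have hp := hpos _ h0
        set c := a (cos1 σ)
        have e1 : ∀ r : E3, ENNReal.ofReal (‖r‖ ^ γ) * (H (cos1 σ) * G (c • r)) =
            (H (cos1 σ) * ENNReal.ofReal (c ^ (-γ))) *
              (ENNReal.ofReal (‖c • r‖ ^ γ) * G (c • r)) := by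
          intro r
          have : ‖r‖ ^ γ = c ^ (-γ) * ‖c • r‖ ^ γ := by
            rw [norm_smul, Real.norm_of_nonneg hp.le, mul_rpow hp.le (norm_nonneg _),
              ← mul_assoc, ← rpow_add hp]
            simp
          rw [this, ENNReal.ofReal_mul (by positivity)]
          ring
        simp_rw [e1]
        rw [lintegral_const_mul, lintegral_scale c hp
          (fun r => ENNReal.ofReal (‖r‖ ^ γ) * G r) (mpow.mul mavg), ← mul_assoc,
          mul_assoc (H _), ← ENNReal.ofReal_mul (by positivity), ← rpow_add hp]
        · ring_nf
        · exact (mpow.mul mavg).comp (measurable_const_smul c)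
    _ = _ := by
        rw [lintegral_mul_const]
        fun_prop

/-- Change of variables for a rotation-equivariant map `Ψ` that scales lengths by `a(cos θ)`, proved
without computing a Jacobian: averaging over the orthogonal group reduces it to radial `g`. -/
theorem angular_formula (γ : ℝ) (H : ℝ → ℝ≥0∞) (hH : Measurable H) (a : ℝ → ℝ)
    (ha : Measurable a) (hpos : ∀ t, H t ≠ 0 → 0 < a t)
    (Ψ : E3 → S2 → E3) (hΨ : Measurable (Function.uncurry Ψ))
    (heq : ∀ (e : E3 ≃ₗᵢ[ℝ] E3) r σ, Ψ (e r) (rot e σ) = e (Ψ r σ))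
    (hn : ∀ r σ, r ≠ 0 → ‖Ψ r σ‖ = ‖r‖ * a (cosR r σ))
    (g : E3 → ℝ≥0∞) (hg : Measurable g) :
    ∫⁻ r : E3, ∫⁻ σ : S2, ENNReal.ofReal (‖r‖ ^ γ) * H (cosR r σ) * g (Ψ r σ) =
      (∫⁻ σ : S2, H (cos1 σ) * ENNReal.ofReal (a (cos1 σ) ^ (-3 - γ))) *
        ∫⁻ r : E3, ENNReal.ofReal (‖r‖ ^ γ) * g r := by
  have mpow : Measurable fun r : E3 => ENNReal.ofReal (‖r‖ ^ γ) := by fun_prop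
  set K : E3 × S2 → ℝ≥0∞ := fun p => ENNReal.ofReal (‖p.1‖ ^ γ) * H (cosR p.1 p.2) with hK
  have mK : Measurable K := (mpow.comp measurable_fst).mul (hH.comp measurable_cosR)
  have avg1 := avg_step K mK (by intro e r σ; simp [hK, cosR_rot]) Ψ hΨ heq g hg
  have avg2 := avg_step' (fun r : E3 => ENNReal.ofReal (‖r‖ ^ γ)) mpow (by simp) g hg
  have mavg := measurable_avg hg
  have e0 : (∫⁻ r : E3, ∫⁻ σ : S2, ENNReal.ofReal (‖r‖ ^ γ) * H (cosR r σ) * g (Ψ r σ)) =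
    ∫⁻ r : E3, ∫⁻ σ : S2, K (r, σ) * g (Ψ r σ) := by simp only [hK]
  have e1 : (∫⁻ r : E3, ∫⁻ σ : S2, ENNReal.ofReal (‖r‖ ^ γ) * H (cosR r σ) * avg g (Ψ r σ)) =
    ∫⁻ r : E3, ∫⁻ σ : S2, K (r, σ) * avg g (Ψ r σ) := by simp only [hK]
  rw [e0, avg1, avg2, ← e1]
  exact angular_radial γ H hH a ha hpos Ψ hn (avg g) mavg (avg_radial g)

/-! ### Integrals of post-collision velocities -/

/-- The vector `v - v*'` in terms of the relative velocity `r = v - v*`. -/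
def dG (r : E3) (σ : S2) : E3 := (2⁻¹ : ℝ) • (r + ‖r‖ • (σ : E3))

lemma norm_S2 (σ : S2) : ‖(σ : E3)‖ = 1 := mem_sphere_zero_iff_norm.1 σ.2

lemma cosR_le_one (r : E3) (σ : S2) : cosR r σ ≤ 1 := by
  have h := real_inner_le_norm r (σ : E3)
  rw [norm_S2, mul_one] at h
  exact div_le_one_of_le₀ h (norm_nonneg _)

lemma neg_one_le_cosR (r : E3) (σ : S2) : -1 ≤ cosR r σ := by
  have h := neg_le_of_abs_le (abs_real_inner_le_norm r (σ : E3))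
  rw [norm_S2, mul_one] at h
  rcases eq_or_ne r 0 with rfl | hr
  · simp [cosR]
  · rw [cosR, le_div_iff₀ (norm_pos_iff.2 hr)]
    linarith

/-- `cos(θ/2)` as a function of `cos θ`. -/
def cH (t : ℝ) : ℝ := Real.sqrt ((1 + t) / 2)

lemma measurable_cH : Measurable cH := by unfold cH; fun_prop

lemma norm_dG (r : E3) (σ : S2) : ‖dG r σ‖ = ‖r‖ * cH (cosR r σ) := by
  rcases eq_or_ne r 0 with rfl | hr
  · simp [dG]
  have hr' : ‖r‖ ≠ 0 := norm_ne_zero_iff.2 hr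
  have h1 : ‖dG r σ‖ ^ 2 = (‖r‖ * cH (cosR r σ)) ^ 2 := by
    rw [mul_pow, cH, Real.sq_sqrt (by linarith [neg_one_le_cosR r σ]), dG, norm_smul, mul_pow,
      norm_add_sq_real, norm_smul, norm_norm, norm_S2, inner_smul_right, cosR]
    norm_num
    field_simp
    ring
  exact (pow_left_inj₀ (norm_nonneg _) (by unfold cH; positivity) two_ne_zero).1 h1

lemma sub_vsP (v w : E3) (σ : S2) : vsP v w σ = v - dG (v - w) σ := by
  unfold vsP dG
  module

lemma vsP_eq (v w : E3) (σ : S2) : vsP v w σ = vP v w σ - ‖v - w‖ • (σ : E3) := by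
  unfold vsP vP
  module

lemma measurable_dG : Measurable (Function.uncurry dG) := by
  have : Continuous (Function.uncurry dG) := by unfold dG Function.uncurry; fun_prop
  exact this.measurable

lemma dG_rot (e : E3 ≃ₗᵢ[ℝ] E3) (r : E3) (σ : S2) : dG (e r) (rot e σ) = e (dG r σ) := by
  simp [dG, rot]

lemma measurable_smulS : Measurable (Function.uncurry fun (r : E3) (σ : S2) => ‖r‖ • (σ : E3)) := by
  have : Continuous (Function.uncurry fun (r : E3) (σ : S2) => ‖r‖ • (σ : E3)) := by
    unfold Function.uncurry; fun_prop
  exact this.measurable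

/-- Convolution of `|·|^γ` with the weight `M`. -/
def kconv (γ : ℝ) (M : E3 → ℝ≥0∞) (v : E3) : ℝ≥0∞ :=
  ∫⁻ w : E3, ENNReal.ofReal (‖v - w‖ ^ γ) * M w

lemma conv_eq (γ : ℝ) (M : E3 → ℝ≥0∞) (v : E3) :
    kconv γ M v = ∫⁻ r : E3, ENNReal.ofReal (‖r‖ ^ γ) * M (v - r) := by
  rw [kconv, ← lintegral_sub_left_eq_self _ v]
  simp

lemma measurable_pow (γ : ℝ) : Measurable fun r : E3 => ENNReal.ofReal (‖r‖ ^ γ) := by fun_prop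

lemma measurable_conv (γ : ℝ) {M : E3 → ℝ≥0∞} (hM : Measurable M) : Measurable (kconv γ M) := by
  have h : Measurable fun p : E3 × E3 => ENNReal.ofReal (‖p.1 - p.2‖ ^ γ) * M p.2 :=
    ((measurable_pow γ).comp (measurable_fst.sub measurable_snd)).mul (hM.comp measurable_snd)
  exact h.lintegral_prod_right'

/-- The substitution `v* ↦ v*'` at fixed `v`. It follows from `angular_formula` for `dG`, whose
length factor is `cos(θ/2)`. -/
lemma gain_at_v (γ : ℝ) (H : ℝ → ℝ≥0∞) (hH : Measurable H) (hpos : ∀ t, H t ≠ 0 → 0 < cH t)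
    (M F : E3 → ℝ≥0∞) (hM : Measurable M) (hF : Measurable F) :
    ∫⁻ v : E3, ∫⁻ w : E3, ∫⁻ σ : S2, ENNReal.ofReal (‖v - w‖ ^ γ) * H (cosTheta v w σ) *
        M (vsP v w σ) * F v =
      (∫⁻ σ : S2, H (cos1 σ) * ENNReal.ofReal (cH (cos1 σ) ^ (-3 - γ))) *
        ∫⁻ v : E3, F v * kconv γ M v := by
  have key : ∀ v : E3, ∫⁻ w : E3, ∫⁻ σ : S2, ENNReal.ofReal (‖v - w‖ ^ γ) * H (cosTheta v w σ) *
        M (vsP v w σ) * F v =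
      (∫⁻ σ : S2, H (cos1 σ) * ENNReal.ofReal (cH (cos1 σ) ^ (-3 - γ))) *
        (F v * kconv γ M v) := by
    intro v
    rw [← lintegral_sub_left_eq_self _ v]
    have h := angular_formula γ H hH cH measurable_cH hpos dG measurable_dG dG_rot
      (fun r σ _ => norm_dG r σ) (fun x => M (v - x)) (hM.comp (measurable_const.sub measurable_id))
    rw [conv_eq, mul_comm (F v), ← mul_assoc, ← h]
    have mK : Measurable fun p : E3 × S2 =>
        ENNReal.ofReal (‖p.1‖ ^ γ) * H (cosR p.1 p.2) * M (v - dG p.1 p.2) :=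
      (((measurable_pow γ).comp measurable_fst).mul (hH.comp measurable_cosR)).mul
        (hM.comp (measurable_const.sub measurable_dG))
    rw [← lintegral_mul_const _ mK.lintegral_prod_right']
    congr 1; ext r
    have mK' : Measurable fun σ : S2 =>
        ENNReal.ofReal (‖r‖ ^ γ) * H (cosR r σ) * M (v - dG r σ) := by
      have hp : Measurable fun σ : S2 => (r, σ) := measurable_prodMk_left
      have h1 : Measurable fun σ : S2 => cosR r σ := measurable_cosR.comp hp
      have h2 : Measurable fun σ : S2 => dG r σ := measurable_dG.comp hp
      exact (measurable_const.mul (hH.comp h1)).mul (hM.comp (measurable_const.sub h2))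
    dsimp only
    rw [← lintegral_mul_const _ mK']
    congr 1; ext σ
    rw [sub_vsP, sub_sub_cancel]
    simp only [cosTheta, sub_sub_cancel]
    rfl
  have mFc : Measurable fun v => F v * kconv γ M v := hF.mul (measurable_conv γ hM)
  simp_rw [key]
  rw [lintegral_const_mul _ mFc]

/-- The pre-post-collisional substitution `(v, v*) ↦ (v', v*')`: after translating `v` by `v - v'`,
the displacement `v' - v*' = |r|σ` has the length of `r`, so `angular_formula` applies with `a = 1`. -/
lemma gain_at_vP (γ : ℝ) (H : ℝ → ℝ≥0∞) (hH : Measurable H)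
    (M F : E3 → ℝ≥0∞) (hM : Measurable M) (hF : Measurable F) :
    ∫⁻ v : E3, ∫⁻ w : E3, ∫⁻ σ : S2, ENNReal.ofReal (‖v - w‖ ^ γ) * H (cosTheta v w σ) *
        M (vsP v w σ) * F (vP v w σ) =
      (∫⁻ σ : S2, H (cos1 σ)) * ∫⁻ v : E3, F v * kconv γ M v := by
  set K : E3 × S2 → ℝ≥0∞ := fun p => ENNReal.ofReal (‖p.1‖ ^ γ) * H (cosR p.1 p.2) with hK
  have mK : Measurable K := ((measurable_pow γ).comp measurable_fst).mul (hH.comp measurable_cosR)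
  -- displacement `v - v'` as a function of `(r, σ)`
  set d : E3 × S2 → E3 := fun p => p.1 - dG p.1 p.2 with hd
  set s : E3 × S2 → E3 := fun p => ‖p.1‖ • (p.2 : E3) with hs
  have md : Measurable d := measurable_fst.sub measurable_dG
  have ms : Measurable s := measurable_smulS
  have hvP : ∀ (v r : E3) (σ : S2), vP v (v - r) σ = v - d (r, σ) := by
    intro v r σ
    simp only [vP, hd, dG, sub_sub_cancel]
    module
  have h1 : ∀ v : E3, ∫⁻ w : E3, ∫⁻ σ : S2, ENNReal.ofReal (‖v - w‖ ^ γ) * H (cosTheta v w σ) *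
        M (vsP v w σ) * F (vP v w σ) =
      ∫⁻ p : E3 × S2, K p * (M (v - d p - s p) * F (v - d p)) := by
    intro v
    have m1 : Measurable fun p : E3 × S2 => K p * (M (v - d p - s p) * F (v - d p)) :=
      mK.mul ((hM.comp ((measurable_const.sub md).sub ms)).mul (hF.comp (measurable_const.sub md)))
    rw [← lintegral_sub_left_eq_self _ v]
    have h2 := lintegral_prod (μ := (volume : Measure E3)) (ν := (volume : Measure S2))
      _ m1.aemeasurable
    refine Eq.trans ?_ h2.symm
    congr 1; ext r
    congr 1; ext σ
    rw [vsP_eq, hvP, sub_sub_cancel, mul_assoc]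
    simp only [cosTheta, sub_sub_cancel]
    rfl
  simp_rw [h1]
  have m2 : Measurable fun q : E3 × (E3 × S2) =>
      K q.2 * (M (q.1 - d q.2 - s q.2) * F (q.1 - d q.2)) := by
    refine (mK.comp measurable_snd).mul ((hM.comp ?_).mul (hF.comp ?_))
    · exact (measurable_fst.sub (md.comp measurable_snd)).sub (ms.comp measurable_snd)
    · exact measurable_fst.sub (md.comp measurable_snd)
  have m3 : Measurable fun q : E3 × (E3 × S2) => K q.2 * (M (q.1 - s q.2) * F q.1) := by
    refine (mK.comp measurable_snd).mul ((hM.comp ?_).mul (hF.comp measurable_fst))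
    exact measurable_fst.sub (ms.comp measurable_snd)
  rw [lintegral_lintegral_swap m2.aemeasurable]
  have h3 : ∀ p : E3 × S2, ∫⁻ v : E3, K p * (M (v - d p - s p) * F (v - d p)) =
      ∫⁻ v : E3, K p * (M (v - s p) * F v) := by
    intro p
    exact lintegral_sub_right_eq_self (fun v => K p * (M (v - s p) * F v)) (d p)
  simp_rw [h3]
  rw [← lintegral_lintegral_swap m3.aemeasurable]
  have mFc : Measurable fun v => F v * kconv γ M v := hF.mul (measurable_conv γ hM)
  rw [← lintegral_const_mul _ mFc]
  congr 1; ext v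
  have h := angular_formula γ H hH (fun _ => 1) measurable_const (fun _ _ => one_pos)
    (fun r σ => ‖r‖ • (σ : E3)) measurable_smulS (by intro e r σ; simp [rot])
    (fun r σ _ => by simp [norm_smul])
    (fun x => M (v - x)) (hM.comp (measurable_const.sub measurable_id))
  simp only [one_rpow, ENNReal.ofReal_one, mul_one] at h
  rw [conv_eq, mul_comm (F v), ← mul_assoc, ← h]
  have m4 : Measurable fun p : E3 × S2 => K p * M (v - s p) :=
    mK.mul (hM.comp (measurable_const.sub ms))
  have h5 : ∫⁻ p : E3 × S2, K p * (M (v - s p) * F v) = (∫⁻ p : E3 × S2, K p * M (v - s p)) * F v := by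
    rw [← lintegral_mul_const _ m4]
    simp_rw [mul_assoc]
  rw [h5]
  congr 1
  exact lintegral_prod (μ := (volume : Measure E3)) (ν := (volume : Measure S2)) _ m4.aemeasurable

/-! ### Splitting of the polynomial weight -/

lemma one_le_jap (v : E3) : 1 ≤ jap v := Real.one_le_sqrt.2 (by nlinarith [sq_nonneg ‖v‖])

lemma jap_pos (v : E3) : 0 < jap v := one_pos.trans_le (one_le_jap v)

lemma norm_le_jap (v : E3) : ‖v‖ ≤ jap v := Real.le_sqrt_of_sq_le (by linarith)

lemma jap_le (v : E3) : jap v ≤ 1 + ‖v‖ :=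
  Real.sqrt_le_iff.2 ⟨by positivity, by nlinarith [norm_nonneg v]⟩

lemma continuous_jap : Continuous jap := by unfold jap; fun_prop

lemma measurable_jap : Measurable jap := continuous_jap.measurable

lemma cH_le_one {t : ℝ} (ht : t ≤ 1) : cH t ≤ 1 := Real.sqrt_le_one.2 (by linarith)

lemma cH_pos {t : ℝ} (ht : 0 ≤ t) : 0 < cH t := Real.sqrt_pos.2 (by linarith)

/-- In the post-collisional weight, `⟨v'⟩` comes with the factor `cos(θ/2)` because
`|v - v*'| = cos(θ/2) |v' - v*'|`. -/
lemma jap_le_post (v w : E3) (σ : S2) :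
    jap v ≤ cH (cosTheta v w σ) * jap (vP v w σ) + 3 * jap (vsP v w σ) := by
  set c := cH (cosTheta v w σ) with hc
  have hc0 : 0 ≤ c := Real.sqrt_nonneg _
  have hc1 : c ≤ 1 := cH_le_one (cosR_le_one (v - w) σ)
  have h1 : ‖v - vsP v w σ‖ = ‖v - w‖ * c := by
    rw [sub_vsP, sub_sub_cancel]; exact norm_dG (v - w) σ
  have h2 : ‖vP v w σ - vsP v w σ‖ = ‖v - w‖ := by
    rw [vsP_eq, sub_sub_cancel, norm_smul, norm_norm, norm_S2, mul_one]
  have h3 : ‖v‖ ≤ ‖v - vsP v w σ‖ + ‖vsP v w σ‖ := by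
    simpa using norm_add_le (v - vsP v w σ) (vsP v w σ)
  have h4 := norm_sub_le (vP v w σ) (vsP v w σ)
  have h5 := norm_le_jap (vP v w σ)
  have h6 := norm_le_jap (vsP v w σ)
  have h7 := one_le_jap (vsP v w σ)
  have h8 := jap_le v
  have h9 := mul_le_mul_of_nonneg_left (h2 ▸ h4) hc0
  have h10 := mul_le_mul_of_nonneg_left h5 hc0
  have h11 := mul_le_mul_of_nonneg_right hc1 (norm_nonneg (vsP v w σ))
  nlinarith

/-- A mean value bound, obtained from Bernoulli's inequality `(1 - z/(y+z))^k ≥ 1 - k z/(y+z)`. -/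
lemma add_rpow_le {y z k : ℝ} (hy : 0 ≤ y) (hz : 0 < z) (hk : 1 ≤ k) :
    (y + z) ^ k ≤ y ^ k + k * z * (y + z) ^ (k - 1) := by
  have hs : 0 < y + z := by linarith
  have h := one_add_mul_self_le_rpow_one_add (s := -(z / (y + z)))
    (by rw [neg_le_neg_iff, div_le_one hs]; linarith) hk
  have e : 1 + -(z / (y + z)) = y / (y + z) := by field_simp; ring
  rw [e, div_rpow hy hs.le, le_div_iff₀ (by positivity)] at h
  rw [rpow_sub_one hs.ne']
  have : (1 + k * -(z / (y + z))) * (y + z) ^ k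
      = (y + z) ^ k - k * z * ((y + z) ^ k / (y + z)) := by field_simp; ring
  linarith

/-- With `A = ⟨v'⟩`, `B = ⟨v*'⟩`, `J = ⟨v⟩`: the weight `J^{2k}` is `c^k J^k A^k` up to a term with half
a power less in both `J` and `A`. -/
lemma weight_split {c A B J k : ℝ} (hc : 0 < c) (hc1 : c ≤ 1) (hA : 1 ≤ A) (hB : 1 ≤ B)
    (hJ : 1 ≤ J) (h : J ≤ c * A + 3 * B) (hk : 4 ≤ k) :
    J ^ (2 * k) ≤ c ^ k * (J ^ k * A ^ k) +
      2 * (3 * k * 4 ^ (k - 1)) * B ^ (k + 1 / 2) * (J ^ (k - 1 / 2) * A ^ (k - 1 / 2)) := by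
  have hA0 : 0 < A := by linarith
  have hB0 : 0 < B := by linarith
  have hJ0 : 0 < J := by linarith
  have h4 : c * A + 3 * B ≤ 4 * A * B := by nlinarith
  have h4' : c * A + 3 * B ≤ 4 * (A * B) := by linarith
  have hs : 0 < c * A + 3 * B := by positivity
  have e1 : J ^ k ≤ c ^ k * A ^ k + 3 * k * 4 ^ (k - 1) * (A ^ (k - 1) * B ^ k) := by
    calc J ^ k ≤ (c * A + 3 * B) ^ k := rpow_le_rpow hJ0.le h (by linarith)
      _ ≤ (c * A) ^ k + k * (3 * B) * (c * A + 3 * B) ^ (k - 1) :=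
          add_rpow_le (by positivity) (by positivity) (by linarith)
      _ ≤ (c * A) ^ k + k * (3 * B) * (4 * (A * B)) ^ (k - 1) := by
          gcongr; linarith
      _ = _ := by
          rw [mul_rpow hc.le hA0.le, mul_rpow (by norm_num) (by positivity),
            mul_rpow hA0.le hB0.le, rpow_sub_one hB0.ne' k]
          field_simp
  have e2 : J ^ (1 / 2 : ℝ) ≤ 2 * (A ^ (1 / 2 : ℝ) * B ^ (1 / 2 : ℝ)) := by
    have h2 : (4 : ℝ) ^ (1 / 2 : ℝ) = 2 := by
      rw [show (4 : ℝ) = 2 ^ (2 : ℝ) by norm_num, ← rpow_mul (by norm_num)]; norm_num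
    calc J ^ (1 / 2 : ℝ) ≤ (4 * (A * B)) ^ (1 / 2 : ℝ) :=
          rpow_le_rpow hJ0.le (h.trans h4') (by norm_num)
      _ = _ := by rw [mul_rpow (by norm_num) (by positivity), mul_rpow hA0.le hB0.le, h2]
  have d1 : J ^ (2 * k) = J ^ k * J ^ k := by rw [← rpow_add hJ0]; congr 1; ring
  have d2 : J ^ k = J ^ (k - 1 / 2) * J ^ (1 / 2 : ℝ) := by
    rw [← rpow_add hJ0]; congr 1; ring
  have d3 : A ^ (k - 1 / 2) = A ^ (k - 1) * A ^ (1 / 2 : ℝ) := by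
    rw [← rpow_add hA0]; congr 1; ring
  have d4 : B ^ (k + 1 / 2) = B ^ k * B ^ (1 / 2 : ℝ) := by rw [← rpow_add hB0]
  have hk0 : 0 < k := by linarith
  calc J ^ (2 * k) = J ^ k * J ^ k := d1
    _ ≤ J ^ k * (c ^ k * A ^ k + 3 * k * 4 ^ (k - 1) * (A ^ (k - 1) * B ^ k)) := by gcongr
    _ = c ^ k * (J ^ k * A ^ k) +
        J ^ (k - 1 / 2) * J ^ (1 / 2 : ℝ) * (3 * k * 4 ^ (k - 1) * (A ^ (k - 1) * B ^ k)) := by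
        rw [← d2]; ring
    _ ≤ c ^ k * (J ^ k * A ^ k) +
        J ^ (k - 1 / 2) * (2 * (A ^ (1 / 2 : ℝ) * B ^ (1 / 2 : ℝ))) *
          (3 * k * 4 ^ (k - 1) * (A ^ (k - 1) * B ^ k)) := by gcongr
    _ = _ := by rw [d3, d4]; ring

/-- Applies the arithmetic-geometric inequality to `weight_split`, with weights `c^a` and `c^{-a}` in
the main term and equal weights in the error term. Here `x = f(v')` and `y = f(v)`. -/
lemma weighted_amgm {c A B J k : ℝ} (a x y : ℝ) (hc : 0 < c) (hc1 : c ≤ 1) (hA : 1 ≤ A)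
    (hB : 1 ≤ B) (hJ : 1 ≤ J) (h : J ≤ c * A + 3 * B) (hk : 4 ≤ k) :
    |x * y * J ^ (2 * k)| ≤
      1 / 2 * c ^ (k + a) * (y ^ 2 * J ^ (2 * k)) + 1 / 2 * c ^ (k - a) * (x ^ 2 * A ^ (2 * k)) +
      3 * k * 4 ^ (k - 1) * B ^ (k + 1 / 2) * (y ^ 2 * J ^ (2 * k - 1)) +
      3 * k * 4 ^ (k - 1) * B ^ (k + 1 / 2) * (x ^ 2 * A ^ (2 * k - 1)) := by
  have hA0 : 0 < A := by linarith
  have hB0 : 0 < B := by linarith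
  have hJ0 : 0 < J := by linarith
  have hk0 : 0 < k := by linarith
  have hw := weight_split hc hc1 hA hB hJ h hk
  have q1 : J ^ (2 * k) = (J ^ k) ^ 2 := by rw [sq, ← rpow_add hJ0]; congr 1; ring
  have q2 : A ^ (2 * k) = (A ^ k) ^ 2 := by rw [sq, ← rpow_add hA0]; congr 1; ring
  have q3 : J ^ (2 * k - 1) = (J ^ (k - 1 / 2)) ^ 2 := by
    rw [sq, ← rpow_add hJ0]; congr 1; ring
  have q4 : A ^ (2 * k - 1) = (A ^ (k - 1 / 2)) ^ 2 := by
    rw [sq, ← rpow_add hA0]; congr 1; ring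
  have q5 : c ^ (k + a) = c ^ k * c ^ a := rpow_add hc _ _
  have q6 : c ^ (k - a) = c ^ k * (c ^ a)⁻¹ := by rw [rpow_sub hc, div_eq_mul_inv]
  have ha : 0 < c ^ a := rpow_pos_of_pos hc a
  have hck : 0 < c ^ k := rpow_pos_of_pos hc k
  rw [abs_mul, abs_mul, abs_of_pos (rpow_pos_of_pos hJ0 (2 * k))]
  have m1 : |x| * |y| * (J ^ k * A ^ k) ≤
      1 / 2 * (c ^ a * (y ^ 2 * (J ^ k) ^ 2) + (c ^ a)⁻¹ * (x ^ 2 * (A ^ k) ^ 2)) := by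
    have e : c ^ a * (y ^ 2 * (J ^ k) ^ 2) + (c ^ a)⁻¹ * (x ^ 2 * (A ^ k) ^ 2)
        - 2 * (|x| * |y| * (J ^ k * A ^ k)) =
        (c ^ a)⁻¹ * (c ^ a * (|y| * J ^ k) - |x| * A ^ k) ^ 2 := by
      rw [← sq_abs x, ← sq_abs y]
      field_simp
      ring
    have : 0 ≤ (c ^ a)⁻¹ * (c ^ a * (|y| * J ^ k) - |x| * A ^ k) ^ 2 := by positivity
    linarith
  have m2 : |x| * |y| * (J ^ (k - 1 / 2) * A ^ (k - 1 / 2)) ≤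
      1 / 2 * (y ^ 2 * (J ^ (k - 1 / 2)) ^ 2 + x ^ 2 * (A ^ (k - 1 / 2)) ^ 2) := by
    rw [← sq_abs x, ← sq_abs y]
    nlinarith [sq_nonneg (|y| * J ^ (k - 1 / 2) - |x| * A ^ (k - 1 / 2))]
  have hE : 0 ≤ 3 * k * 4 ^ (k - 1) * B ^ (k + 1 / 2) := by positivity
  rw [q5, q6]
  calc |x| * |y| * J ^ (2 * k) ≤ |x| * |y| * (c ^ k * (J ^ k * A ^ k) +
      2 * (3 * k * 4 ^ (k - 1)) * B ^ (k + 1 / 2) * (J ^ (k - 1 / 2) * A ^ (k - 1 / 2))) := by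
        gcongr
    _ = c ^ k * (|x| * |y| * (J ^ k * A ^ k)) +
      2 * (3 * k * 4 ^ (k - 1) * B ^ (k + 1 / 2)) *
        (|x| * |y| * (J ^ (k - 1 / 2) * A ^ (k - 1 / 2))) := by ring
    _ ≤ c ^ k * (1 / 2 * (c ^ a * (y ^ 2 * (J ^ k) ^ 2) + (c ^ a)⁻¹ * (x ^ 2 * (A ^ k) ^ 2))) +
      2 * (3 * k * 4 ^ (k - 1) * B ^ (k + 1 / 2)) *
        (1 / 2 * (y ^ 2 * (J ^ (k - 1 / 2)) ^ 2 + x ^ 2 * (A ^ (k - 1 / 2)) ^ 2)) := by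
        gcongr
    _ = _ := by rw [q1, q2, q3, q4]; ring

/-! ### Bound of the gain term -/

lemma measurable_maxw : Measurable maxw := by unfold maxw; fun_prop

lemma maxw_pos (v : E3) : 0 < maxw v := by unfold maxw; positivity

lemma measurable_cosTheta : Measurable fun p : E3 × E3 × S2 => cosTheta p.1 p.2.1 p.2.2 :=
  measurable_cosR.comp
    ((measurable_fst.sub (measurable_fst.comp measurable_snd)).prodMk
      (measurable_snd.comp measurable_snd))

lemma measurable_vP : Measurable fun p : E3 × E3 × S2 => vP p.1 p.2.1 p.2.2 := by
  have : Continuous fun p : E3 × E3 × S2 => vP p.1 p.2.1 p.2.2 := by unfold vP; fun_prop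
  exact this.measurable

lemma measurable_vsP : Measurable fun p : E3 × E3 × S2 => vsP p.1 p.2.1 p.2.2 := by
  have : Continuous fun p : E3 × E3 × S2 => vsP p.1 p.2.1 p.2.2 := by unfold vsP; fun_prop
  exact this.measurable

/-- The integrand of the gain part of `∫ Q(μ, f) f ⟨v⟩^{2k}`. -/
def gainG (γ k : ℝ) (bf : ℝ → ℝ) (f : E3 → ℝ) (v w : E3) (σ : S2) : ℝ :=
  ‖v - w‖ ^ γ * bf (cosTheta v w σ) * maxw (vsP v w σ) * f (vP v w σ) * f v * jap v ^ (2 * k)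

lemma gain_pointwise (γ k a : ℝ) (hk : 4 ≤ k) {bf : ℝ → ℝ} (hbf : gradCutoff bf) (f : E3 → ℝ)
    (v w : E3) (σ : S2) :
    |gainG γ k bf f v w σ| ≤
      ‖v - w‖ ^ γ * (1 / 2 * bf (cosTheta v w σ) * cH (cosTheta v w σ) ^ (k + a)) *
        maxw (vsP v w σ) * (f v ^ 2 * jap v ^ (2 * k)) +
      ‖v - w‖ ^ γ * (1 / 2 * bf (cosTheta v w σ) * cH (cosTheta v w σ) ^ (k - a)) *
        maxw (vsP v w σ) * (f (vP v w σ) ^ 2 * jap (vP v w σ) ^ (2 * k)) +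
      ‖v - w‖ ^ γ * (3 * k * 4 ^ (k - 1) * bf (cosTheta v w σ)) *
        (maxw (vsP v w σ) * jap (vsP v w σ) ^ (k + 1 / 2)) * (f v ^ 2 * jap v ^ (2 * k - 1)) +
      ‖v - w‖ ^ γ * (3 * k * 4 ^ (k - 1) * bf (cosTheta v w σ)) *
        (maxw (vsP v w σ) * jap (vsP v w σ) ^ (k + 1 / 2)) *
          (f (vP v w σ) ^ 2 * jap (vP v w σ) ^ (2 * k - 1)) := by
  unfold gainG
  rcases lt_or_ge (cosTheta v w σ) 0 with ht | ht
  · simp [hbf.2.2.2 _ ht]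
  have h := weighted_amgm a (f (vP v w σ)) (f v) (cH_pos ht)
    (cH_le_one (cosR_le_one (v - w) σ)) (one_le_jap (vP v w σ)) (one_le_jap (vsP v w σ))
    (one_le_jap v) (jap_le_post v w σ) hk
  have h0 : 0 ≤ ‖v - w‖ ^ γ * bf (cosTheta v w σ) * maxw (vsP v w σ) :=
    mul_nonneg (mul_nonneg (by positivity) (hbf.2.1 _)) (maxw_pos _).le
  have h1 := mul_le_mul_of_nonneg_left h h0
  have e : ‖v - w‖ ^ γ * bf (cosTheta v w σ) * maxw (vsP v w σ) * f (vP v w σ) * f v *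
      jap v ^ (2 * k) = ‖v - w‖ ^ γ * bf (cosTheta v w σ) * maxw (vsP v w σ) *
        (f (vP v w σ) * f v * jap v ^ (2 * k)) := by ring
  rw [e, abs_mul, abs_of_nonneg h0]
  refine h1.trans (le_of_eq ?_)
  ring

/-- The angular constant of the error term: the sum of the constants of `gain_at_v` and `gain_at_vP`
for the kernel `3k 4^{k-1} b`. -/
def angC (γ k : ℝ) (bf : ℝ → ℝ) : ℝ≥0∞ :=
  (∫⁻ σ : S2, ENNReal.ofReal (3 * k * 4 ^ (k - 1) * bf (cos1 σ)) *
      ENNReal.ofReal (cH (cos1 σ) ^ (-3 - γ))) +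
    ∫⁻ σ : S2, ENNReal.ofReal (3 * k * 4 ^ (k - 1) * bf (cos1 σ))

lemma bf_le {bf : ℝ → ℝ} (hbf : gradCutoff bf) : ∃ L : ℝ, 0 < L ∧ ∀ t ≤ 1, bf t ≤ L := by
  obtain ⟨K, hK, h⟩ := hbf.2.2.1
  refine ⟨K⁻¹, inv_pos.2 hK, fun t ht => ?_⟩
  rcases lt_or_ge t 0 with h0 | h0
  · rw [hbf.2.2.2 t h0]; exact (inv_pos.2 hK).le
  · exact (h t ⟨h0, ht⟩).2

lemma cos1_le_one (σ : S2) : cos1 σ ≤ 1 := cosR_e1 σ ▸ cosR_le_one e1 σ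

/-- The factor `cos^{-3-γ}(θ/2)` is bounded on the support of `b`, where `cos θ ≥ 0`. -/
lemma angC_lt_top (γ k : ℝ) (hγ : -3 < γ) (hk : 4 ≤ k) {bf : ℝ → ℝ} (hbf : gradCutoff bf) :
    angC γ k bf < ∞ := by
  obtain ⟨L, hL, hb⟩ := bf_le hbf
  have hD : 0 ≤ 3 * k * 4 ^ (k - 1) := by
    have : 0 ≤ k := by linarith
    positivity
  refine ENNReal.add_lt_top.2 ⟨?_, ?_⟩
  · refine lt_of_le_of_lt (lintegral_mono (g := fun _ : S2 =>
      ENNReal.ofReal (3 * k * 4 ^ (k - 1) * L * cH 0 ^ (-3 - γ))) fun σ => ?_) ?_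
    · dsimp only
      rw [← ENNReal.ofReal_mul (mul_nonneg hD (hbf.2.1 _))]
      apply ENNReal.ofReal_le_ofReal
      rcases lt_or_ge (cos1 σ) 0 with ht | ht
      · rw [hbf.2.2.2 _ ht]
        have : 0 ≤ cH 0 := Real.sqrt_nonneg _
        simp only [mul_zero, zero_mul]
        positivity
      · have h0 : 0 < cH 0 := cH_pos le_rfl
        have h1 : cH 0 ≤ cH (cos1 σ) := Real.sqrt_le_sqrt (by linarith)
        have h2 : cH (cos1 σ) ^ (-3 - γ) ≤ cH 0 ^ (-3 - γ) :=
          rpow_le_rpow_of_nonpos h0 h1 (by linarith)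
        have h3 := hb _ (cos1_le_one σ)
        have h4 : 0 ≤ cH (cos1 σ) ^ (-3 - γ) := rpow_nonneg (Real.sqrt_nonneg _) _
        gcongr
    · rw [lintegral_const]
      exact ENNReal.mul_lt_top ENNReal.ofReal_lt_top (measure_lt_top _ _)
  · refine lt_of_le_of_lt (lintegral_mono (g := fun _ : S2 =>
      ENNReal.ofReal (3 * k * 4 ^ (k - 1) * L)) fun σ => ?_) ?_
    · exact ENNReal.ofReal_le_ofReal (mul_le_mul_of_nonneg_left (hb _ (cos1_le_one σ)) hD)
    · rw [lintegral_const]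
      exact ENNReal.mul_lt_top ENNReal.ofReal_lt_top (measure_lt_top _ _)

lemma lintegral_triple (T : E3 × E3 × S2 → ℝ≥0∞) (mT : Measurable T) :
    ∫⁻ v : E3, ∫⁻ w : E3, ∫⁻ σ : S2, T (v, w, σ) = ∫⁻ p, T p := by
  rw [show (volume : Measure (E3 × E3 × S2)) = (volume : Measure E3).prod
    ((volume : Measure E3).prod (volume : Measure S2)) from rfl, lintegral_prod _ mT.aemeasurable]
  congr 1; ext v
  have mTv : Measurable fun q : E3 × S2 => T (v, q) := mT.comp measurable_prodMk_left
  exact (lintegral_prod (μ := (volume : Measure E3)) (ν := (volume : Measure S2))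
    _ mTv.aemeasurable).symm

lemma ofReal_mul4 {a b c d : ℝ} (ha : 0 ≤ a) (hb : 0 ≤ b) (hc : 0 ≤ c) :
    ENNReal.ofReal (a * b * c * d) =
      ENNReal.ofReal a * ENNReal.ofReal b * ENNReal.ofReal c * ENNReal.ofReal d := by
  rw [ENNReal.ofReal_mul (by positivity), ENNReal.ofReal_mul (by positivity),
    ENNReal.ofReal_mul ha]

/-- The choice `a = (3+γ)/2` in the weighted splitting gives both main terms the angular factor
`½ b cos^{k-(3+γ)/2}(θ/2)`, since `k + a - (3+γ) = k - a`. -/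
lemma gain_bound (γ k : ℝ) (hk : 4 ≤ k) {bf : ℝ → ℝ} (hbf : gradCutoff bf)
    {f : E3 → ℝ} (hf : Measurable f) :
    ∫⁻ v : E3, ∫⁻ w : E3, ∫⁻ σ : S2, ENNReal.ofReal |gainG γ k bf f v w σ| ≤
      (∫⁻ σ : S2, ENNReal.ofReal (bf (cos1 σ) * cosHalf1 σ ^ (k - (3 + γ) / 2))) *
        (∫⁻ v : E3, ENNReal.ofReal (f v ^ 2 * jap v ^ (2 * k)) *
          kconv γ (fun w => ENNReal.ofReal (maxw w)) v) +
      angC γ k bf * ∫⁻ v : E3, ENNReal.ofReal (f v ^ 2 * jap v ^ (2 * k - 1)) *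
        kconv γ (fun w => ENNReal.ofReal (maxw w * jap w ^ (k + 1 / 2))) v := by
  set a := (3 + γ) / 2 with ha
  have hk0 : 0 < k := by linarith
  have hD : 0 ≤ 3 * k * 4 ^ (k - 1) := by positivity
  have mb := hbf.1
  have pb := hbf.2.1
  have pc : ∀ t, 0 ≤ cH t := fun t => Real.sqrt_nonneg _
  have mj := measurable_jap
  have mm := measurable_maxw
  have mcH := measurable_cH
  have mct := measurable_cosTheta
  have mvP := measurable_vP
  have mvsP := measurable_vsP
  set H1 : ℝ → ℝ≥0∞ := fun t => ENNReal.ofReal (1 / 2 * bf t * cH t ^ (k + a)) with hH1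
  set H2 : ℝ → ℝ≥0∞ := fun t => ENNReal.ofReal (1 / 2 * bf t * cH t ^ (k - a)) with hH2
  set H3 : ℝ → ℝ≥0∞ := fun t => ENNReal.ofReal (3 * k * 4 ^ (k - 1) * bf t) with hH3
  set M1 : E3 → ℝ≥0∞ := fun w => ENNReal.ofReal (maxw w) with hM1
  set M2 : E3 → ℝ≥0∞ := fun w => ENNReal.ofReal (maxw w * jap w ^ (k + 1 / 2)) with hM2
  set F1 : E3 → ℝ≥0∞ := fun v => ENNReal.ofReal (f v ^ 2 * jap v ^ (2 * k)) with hF1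
  set F2 : E3 → ℝ≥0∞ := fun v => ENNReal.ofReal (f v ^ 2 * jap v ^ (2 * k - 1)) with hF2
  have mH1 : Measurable H1 := by fun_prop
  have mH2 : Measurable H2 := by fun_prop
  have mH3 : Measurable H3 := by fun_prop
  have mM1 : Measurable M1 := by fun_prop
  have mM2 : Measurable M2 := by fun_prop
  have mF1 : Measurable F1 := by fun_prop
  have mF2 : Measurable F2 := by fun_prop
  have hpos : ∀ t, bf t ≠ 0 → 0 < cH t := fun t ht => by
    by_contra hc
    exact ht (hbf.2.2.2 t (by by_contra h; exact hc (cH_pos (not_lt.1 h))))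
  have g1 := gain_at_v γ H1 mH1 (fun t ht => hpos t fun h => ht (by simp [hH1, h])) M1 F1 mM1 mF1
  have g2 := gain_at_vP γ H2 mH2 M1 F1 mM1 mF1
  have g3 := gain_at_v γ H3 mH3 (fun t ht => hpos t fun h => ht (by simp [hH3, h])) M2 F2 mM2 mF2
  have g4 := gain_at_vP γ H3 mH3 M2 F2 mM2 mF2
  set T1 : E3 × E3 × S2 → ℝ≥0∞ := fun p => ENNReal.ofReal (‖p.1 - p.2.1‖ ^ γ) *
    H1 (cosTheta p.1 p.2.1 p.2.2) * M1 (vsP p.1 p.2.1 p.2.2) * F1 p.1 with hT1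
  set T2 : E3 × E3 × S2 → ℝ≥0∞ := fun p => ENNReal.ofReal (‖p.1 - p.2.1‖ ^ γ) *
    H2 (cosTheta p.1 p.2.1 p.2.2) * M1 (vsP p.1 p.2.1 p.2.2) * F1 (vP p.1 p.2.1 p.2.2) with hT2
  set T3 : E3 × E3 × S2 → ℝ≥0∞ := fun p => ENNReal.ofReal (‖p.1 - p.2.1‖ ^ γ) *
    H3 (cosTheta p.1 p.2.1 p.2.2) * M2 (vsP p.1 p.2.1 p.2.2) * F2 p.1 with hT3
  set T4 : E3 × E3 × S2 → ℝ≥0∞ := fun p => ENNReal.ofReal (‖p.1 - p.2.1‖ ^ γ) *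
    H3 (cosTheta p.1 p.2.1 p.2.2) * M2 (vsP p.1 p.2.1 p.2.2) * F2 (vP p.1 p.2.1 p.2.2) with hT4
  have mR : Measurable fun p : E3 × E3 × S2 => ENNReal.ofReal (‖p.1 - p.2.1‖ ^ γ) :=
    (measurable_pow γ).comp (measurable_fst.sub (measurable_fst.comp measurable_snd))
  have mT1 : Measurable T1 :=
    ((mR.mul (mH1.comp mct)).mul (mM1.comp mvsP)).mul (mF1.comp measurable_fst)
  have mT2 : Measurable T2 := ((mR.mul (mH2.comp mct)).mul (mM1.comp mvsP)).mul (mF1.comp mvP)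
  have mT3 : Measurable T3 :=
    ((mR.mul (mH3.comp mct)).mul (mM2.comp mvsP)).mul (mF2.comp measurable_fst)
  have mT4 : Measurable T4 := ((mR.mul (mH3.comp mct)).mul (mM2.comp mvsP)).mul (mF2.comp mvP)
  have iter := fun T (mT : Measurable T) => lintegral_triple T mT
  have i1 := iter T1 mT1
  have i2 := iter T2 mT2
  have i3 := iter T3 mT3
  have i4 := iter T4 mT4
  have mG : Measurable fun p : E3 × E3 × S2 =>
      ENNReal.ofReal |gainG γ k bf f p.1 p.2.1 p.2.2| := by
    unfold gainG; fun_prop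
  have iG := iter _ mG
  dsimp only at iG
  rw [iG]
  have hpt : ∀ p : E3 × E3 × S2, ENNReal.ofReal |gainG γ k bf f p.1 p.2.1 p.2.2| ≤
      T1 p + T2 p + T3 p + T4 p := by
    rintro ⟨v, w, σ⟩
    refine (ENNReal.ofReal_le_ofReal (gain_pointwise γ k a hk hbf f v w σ)).trans ?_
    have n0 : 0 ≤ ‖v - w‖ ^ γ := by positivity
    have n1 := pb (cosTheta v w σ)
    have n2 := pc (cosTheta v w σ)
    have n3 := (maxw_pos (vsP v w σ)).le
    have n4 := (jap_pos (vsP v w σ)).le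
    refine (ENNReal.ofReal_add_le.trans (add_le_add (ENNReal.ofReal_add_le.trans
      (add_le_add ENNReal.ofReal_add_le le_rfl)) le_rfl)).trans (le_of_eq ?_)
    simp only [hT1, hT2, hT3, hT4, hH1, hH2, hH3, hM1, hM2, hF1, hF2]
    rw [ofReal_mul4 n0 (by positivity) n3, ofReal_mul4 n0 (by positivity) n3,
      ofReal_mul4 n0 (by positivity) (by positivity), ofReal_mul4 n0 (by positivity) (by positivity)]
  refine (lintegral_mono hpt).trans (le_of_eq ?_)
  rw [lintegral_add_right _ mT4, lintegral_add_right _ mT3, lintegral_add_right _ mT2, ← i1, ← i2, ← i3, ← i4]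
  refine Eq.trans (congrArg₂ (· + ·) (congrArg₂ (· + ·) (congrArg₂ (· + ·) g1 g2) g3) g4) ?_
  have hsum : (∫⁻ σ : S2, H1 (cos1 σ) * ENNReal.ofReal (cH (cos1 σ) ^ (-3 - γ))) +
      ∫⁻ σ : S2, H2 (cos1 σ) =
      ∫⁻ σ : S2, ENNReal.ofReal (bf (cos1 σ) * cosHalf1 σ ^ (k - a)) := by
    have m2 : Measurable fun σ : S2 => H2 (cos1 σ) := mH2.comp measurable_cos1
    rw [← lintegral_add_right _ m2]
    congr 1; ext σ
    have n1 := pb (cos1 σ)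
    have n2 := pc (cos1 σ)
    simp only [hH1, hH2]
    rw [← ENNReal.ofReal_mul (by positivity), ← ENNReal.ofReal_add (by positivity) (by positivity)]
    congr 1
    change _ = bf (cos1 σ) * cH (cos1 σ) ^ (k - a)
    by_cases hb : bf (cos1 σ) = 0
    · simp [hb]
    have h := hpos _ hb
    have : cH (cos1 σ) ^ (k + a) * cH (cos1 σ) ^ (-3 - γ) = cH (cos1 σ) ^ (k - a) := by
      rw [← rpow_add h]; congr 1; rw [ha]; ring
    linear_combination (1 / 2 * bf (cos1 σ)) * this
  rw [← hsum, angC]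
  ring

/-! ### Convolution with a decaying weight -/

lemma jap_add_le (x y : E3) : jap (x + y) ≤ 3 * (jap x * jap y) := by
  have h1 := jap_le (x + y)
  have h2 := norm_add_le x y
  have h3 := norm_le_jap x
  have h4 := norm_le_jap y
  have h5 := one_le_jap x
  have h6 := one_le_jap y
  nlinarith [mul_nonneg (sub_nonneg.2 h5) (sub_nonneg.2 h6)]

/-- The indicator of the unit ball times `|·|^γ`. -/
def singPart (γ : ℝ) (x : E3) : ℝ := (Metric.ball (0 : E3) 1).indicator (fun x => ‖x‖ ^ γ) x

lemma singPart_nonneg (γ : ℝ) (x : E3) : 0 ≤ singPart γ x :=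
  Set.indicator_nonneg (fun _ _ => by positivity) x

lemma measurable_singPart (γ : ℝ) : Measurable (singPart γ) :=
  Measurable.indicator (by fun_prop) Metric.isOpen_ball.measurableSet

/-- Peetre's inequality together with a splitting of the singularity: the kernel `|v - w|^γ` is
comparable to `⟨v⟩^γ` up to polynomial growth in `w` and a locally integrable singularity. -/
lemma kernel_le (γ : ℝ) (v w : E3) :
    ‖v - w‖ ^ γ ≤ jap v ^ γ * (6 ^ |γ| * jap w ^ |γ|) * (1 + singPart γ (v - w)) := by
  have jv := jap_pos v
  have jw := jap_pos w
  have jx := jap_pos (v - w)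
  have hs := singPart_nonneg γ (v - w)
  rcases le_or_gt 0 γ with hγ | hγ
  · rw [abs_of_nonneg hγ]
    have h1 : jap (v - w) ≤ 6 * (jap v * jap w) := by
      have := jap_add_le v (-w)
      have e : jap (-w) = jap w := by simp [jap]
      rw [e, ← sub_eq_add_neg] at this
      nlinarith [mul_pos jv jw]
    calc ‖v - w‖ ^ γ ≤ (6 * (jap v * jap w)) ^ γ :=
          rpow_le_rpow (norm_nonneg _) ((norm_le_jap _).trans h1) hγ
      _ = jap v ^ γ * (6 ^ γ * jap w ^ γ) * 1 := by
          rw [mul_rpow (by norm_num) (by positivity), mul_rpow jv.le jw.le]; ring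
      _ ≤ _ := by
          have h1 : (1 : ℝ) ≤ 1 + singPart γ (v - w) := by linarith
          gcongr
  · rw [abs_of_neg hγ]
    -- at `v = w` the left side is the junk value `0 ^ γ = 0`
    rcases eq_or_ne (v - w) 0 with h0 | h0
    · rw [h0, norm_zero, zero_rpow hγ.ne]
      rw [h0] at hs
      positivity
    have hx : 0 < ‖v - w‖ := norm_pos_iff.2 h0
    have h1 : jap v ≤ 3 * (jap (v - w) * jap w) := by simpa using jap_add_le (v - w) w
    have key : (jap (v - w)) ^ (-γ) * ‖v - w‖ ^ γ ≤ 2 ^ (-γ) * (1 + singPart γ (v - w)) := by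
      have h2 := jap_le (v - w)
      have hγ' : 0 ≤ -γ := by linarith
      rcases lt_or_ge ‖v - w‖ 1 with hl | hl
      · have e : singPart γ (v - w) = ‖v - w‖ ^ γ := by
          simp [singPart, hl]
        rw [e]
        have : jap (v - w) ^ (-γ) ≤ 2 ^ (-γ) := rpow_le_rpow jx.le (by linarith) hγ'
        have hp : 0 < ‖v - w‖ ^ γ := rpow_pos_of_pos hx γ
        have hp2 : (0 : ℝ) < 2 ^ (-γ) := by positivity
        nlinarith
      · have h3 : jap (v - w) ^ (-γ) ≤ (2 * ‖v - w‖) ^ (-γ) :=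
          rpow_le_rpow jx.le (by linarith) hγ'
        have hp : 0 < ‖v - w‖ ^ γ := rpow_pos_of_pos hx γ
        have h4 : (2 * ‖v - w‖) ^ (-γ) * ‖v - w‖ ^ γ = 2 ^ (-γ) := by
          rw [mul_rpow (by norm_num) hx.le, mul_assoc, ← rpow_add hx]; simp
        have h5 := mul_le_mul_of_nonneg_right h3 hp.le
        have hp2 : (0 : ℝ) < 2 ^ (-γ) := by positivity
        nlinarith [mul_nonneg hp2.le hs]
    have h2 : jap v ^ (-γ) ≤ 3 ^ (-γ) * (jap (v - w) ^ (-γ) * jap w ^ (-γ)) := by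
      have := rpow_le_rpow jv.le h1 (by linarith : 0 ≤ -γ)
      rwa [mul_rpow (by norm_num) (by positivity), mul_rpow jx.le jw.le] at this
    have e6 : (6 : ℝ) ^ (-γ) = 3 ^ (-γ) * 2 ^ (-γ) := by
      rw [← mul_rpow (by norm_num) (by norm_num)]; norm_num
    have ev : jap v ^ γ * jap v ^ (-γ) = 1 := by rw [← rpow_add jv]; simp
    have pv : 0 < jap v ^ γ := rpow_pos_of_pos jv γ
    calc ‖v - w‖ ^ γ = jap v ^ γ * (jap v ^ (-γ) * ‖v - w‖ ^ γ) := by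
          rw [← mul_assoc, ev, one_mul]
      _ ≤ jap v ^ γ * (3 ^ (-γ) * (jap (v - w) ^ (-γ) * jap w ^ (-γ)) * ‖v - w‖ ^ γ) := by
          gcongr
      _ = jap v ^ γ * (3 ^ (-γ) * jap w ^ (-γ)) * (jap (v - w) ^ (-γ) * ‖v - w‖ ^ γ) := by ring
      _ ≤ jap v ^ γ * (3 ^ (-γ) * jap w ^ (-γ)) * (2 ^ (-γ) * (1 + singPart γ (v - w))) := by
          gcongr
      _ = _ := by rw [e6]; ring

/-- The Maxwellian beats every polynomial; the exponent `-4` is integrable in dimension three. -/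
lemma maxw_decay (p : ℝ) : ∃ S : ℝ, 0 < S ∧
    ∀ w : E3, maxw w * jap w ^ p ≤ S * (1 + ‖w‖) ^ (-4 : ℝ) := by
  obtain ⟨n, hn⟩ := exists_nat_ge (|p| + 4)
  refine ⟨(2 * π) ^ (-(3 : ℝ) / 2) * (n.factorial * Real.exp (3 / 2)), by positivity, fun w => ?_⟩
  have h1 : 0 < 1 + ‖w‖ := by positivity
  have h1' : 1 ≤ 1 + ‖w‖ := by linarith [norm_nonneg w]
  have e4 : (1 + ‖w‖) ^ (-4 : ℝ) * (1 + ‖w‖) ^ (4 : ℝ) = 1 := by rw [← rpow_add h1]; simp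
  have h2 : jap w ^ p ≤ (1 + ‖w‖) ^ |p| :=
    (rpow_le_rpow_of_exponent_le (one_le_jap w) (le_abs_self p)).trans
      (rpow_le_rpow (jap_pos w).le (jap_le w) (abs_nonneg p))
  have h3 : (1 + ‖w‖) ^ |p| * (1 + ‖w‖) ^ (4 : ℝ) ≤ n.factorial * Real.exp (1 + ‖w‖) := by
    rw [← rpow_add h1]
    refine (rpow_le_rpow_of_exponent_le h1' hn).trans ?_
    rw [rpow_natCast, mul_comm]
    exact (div_le_iff₀ (by positivity)).1 (Real.pow_div_factorial_le_exp _ h1.le n)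
  -- `1 + s - s²/2 ≤ 3/2`
  have h4 : Real.exp (-‖w‖ ^ 2 / 2) * Real.exp (1 + ‖w‖) ≤ Real.exp (3 / 2) := by
    rw [← Real.exp_add]
    exact Real.exp_le_exp.2 (by nlinarith [sq_nonneg (‖w‖ - 1)])
  have h5 : Real.exp (-‖w‖ ^ 2 / 2) * ((1 + ‖w‖) ^ |p| * (1 + ‖w‖) ^ (4 : ℝ)) ≤
      n.factorial * Real.exp (3 / 2) := by
    calc _ ≤ Real.exp (-‖w‖ ^ 2 / 2) * (n.factorial * Real.exp (1 + ‖w‖)) := by gcongr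
      _ = n.factorial * (Real.exp (-‖w‖ ^ 2 / 2) * Real.exp (1 + ‖w‖)) := by ring
      _ ≤ _ := by gcongr
  unfold maxw
  calc (2 * π) ^ (-(3 : ℝ) / 2) * Real.exp (-‖w‖ ^ 2 / 2) * jap w ^ p
      ≤ (2 * π) ^ (-(3 : ℝ) / 2) * Real.exp (-‖w‖ ^ 2 / 2) * (1 + ‖w‖) ^ |p| := by gcongr
    _ = (2 * π) ^ (-(3 : ℝ) / 2) *
        (Real.exp (-‖w‖ ^ 2 / 2) * ((1 + ‖w‖) ^ |p| * (1 + ‖w‖) ^ (4 : ℝ))) *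
          (1 + ‖w‖) ^ (-4 : ℝ) := by
        linear_combination (-(2 * π) ^ (-(3 : ℝ) / 2) * Real.exp (-‖w‖ ^ 2 / 2) *
          (1 + ‖w‖) ^ |p|) * e4
    _ ≤ _ := by gcongr

lemma lintegral_singPart (γ : ℝ) (hγ : -3 < γ) : ∫⁻ x : E3, ENNReal.ofReal (singPart γ x) < ∞ := by
  have h : IntegrableOn (fun x : E3 => ‖x‖ ^ γ) (Metric.ball 0 1) volume := by
    refine integrableOn_ball_of_norm_le_rpow (C := 1) (α := -γ) (by simp) (by simp; linarith) ?_ ?_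
    · refine Filter.Eventually.of_forall fun x => ?_
      rw [neg_neg, one_mul, Real.norm_of_nonneg (by positivity)]
    · exact (show Measurable fun x : E3 => ‖x‖ ^ γ by fun_prop).aestronglyMeasurable
  have h2 : Integrable (singPart γ) (volume : Measure E3) :=
    (integrable_indicator_iff Metric.isOpen_ball.measurableSet).2 h
  exact h2.lintegral_lt_top

lemma conv_bound (γ N : ℝ) (hγ : -3 < γ) : ∃ C : ℝ≥0∞, C < ∞ ∧ ∀ v : E3,
    kconv γ (fun w => ENNReal.ofReal (maxw w * jap w ^ N)) v ≤ C * ENNReal.ofReal (jap v ^ γ) := by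
  obtain ⟨S, hS, hd⟩ := maxw_decay (N + |γ|)
  refine ⟨ENNReal.ofReal (6 ^ |γ| * S) * ((∫⁻ w : E3, ENNReal.ofReal ((1 + ‖w‖) ^ (-4 : ℝ))) +
    ∫⁻ x : E3, ENNReal.ofReal (singPart γ x)), ?_, fun v => ?_⟩
  · refine ENNReal.mul_lt_top ENNReal.ofReal_lt_top (ENNReal.add_lt_top.2 ⟨?_, ?_⟩)
    · exact finite_integral_one_add_norm (by simp; norm_num)
    · exact lintegral_singPart γ hγ
  · have hpt : ∀ w : E3, ENNReal.ofReal (‖v - w‖ ^ γ) * ENNReal.ofReal (maxw w * jap w ^ N) ≤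
        ENNReal.ofReal (6 ^ |γ| * S) * ENNReal.ofReal (jap v ^ γ) *
          (ENNReal.ofReal ((1 + ‖w‖) ^ (-4 : ℝ)) + ENNReal.ofReal (singPart γ (v - w))) := by
      intro w
      have hs := singPart_nonneg γ (v - w)
      have hm := (maxw_pos w).le
      have jv := (jap_pos v).le
      have jw := (jap_pos w).le
      have h1 : 0 ≤ (1 + ‖w‖) ^ (-4 : ℝ) := by positivity
      have h1' : (1 + ‖w‖) ^ (-4 : ℝ) ≤ 1 :=
        rpow_le_one_of_one_le_of_nonpos (by linarith [norm_nonneg w]) (by norm_num)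
      rw [← ENNReal.ofReal_mul (by positivity), ← ENNReal.ofReal_mul (by positivity),
        ← ENNReal.ofReal_add h1 hs, ← ENNReal.ofReal_mul (by positivity)]
      apply ENNReal.ofReal_le_ofReal
      calc ‖v - w‖ ^ γ * (maxw w * jap w ^ N)
          ≤ jap v ^ γ * (6 ^ |γ| * jap w ^ |γ|) * (1 + singPart γ (v - w)) *
            (maxw w * jap w ^ N) := by
              gcongr
              exact kernel_le γ v w
        _ = jap v ^ γ * 6 ^ |γ| * (1 + singPart γ (v - w)) * (maxw w * jap w ^ (N + |γ|)) := by
              rw [rpow_add (jap_pos w)]; ring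
        _ ≤ jap v ^ γ * 6 ^ |γ| * (1 + singPart γ (v - w)) * (S * (1 + ‖w‖) ^ (-4 : ℝ)) :=
              mul_le_mul_of_nonneg_left (hd w) (by positivity)
        _ = 6 ^ |γ| * S * jap v ^ γ *
            ((1 + ‖w‖) ^ (-4 : ℝ) + (1 + ‖w‖) ^ (-4 : ℝ) * singPart γ (v - w)) := by ring
        _ ≤ 6 ^ |γ| * S * jap v ^ γ * ((1 + ‖w‖) ^ (-4 : ℝ) + 1 * singPart γ (v - w)) := by gcongr
        _ = _ := by rw [one_mul]
    have m1 : Measurable fun w : E3 => ENNReal.ofReal ((1 + ‖w‖) ^ (-4 : ℝ)) := by fun_prop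
    have m2 : Measurable fun w : E3 => ENNReal.ofReal (singPart γ (v - w)) :=
      ((measurable_singPart γ).comp (measurable_const.sub measurable_id)).ennreal_ofReal
    have m3 : Measurable fun w : E3 =>
      ENNReal.ofReal ((1 + ‖w‖) ^ (-4 : ℝ)) + ENNReal.ofReal (singPart γ (v - w)) := m1.add m2
    refine (lintegral_mono hpt).trans (le_of_eq ?_)
    rw [lintegral_const_mul _ m3, lintegral_add_left m1,
      lintegral_sub_left_eq_self (fun x => ENNReal.ofReal (singPart γ x)) v]
    ring

/-! ### The quadratic form of the collision operator -/

lemma integral_triple {T : E3 × E3 × S2 → ℝ} (hT : Integrable T) :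
    ∫ p, T p = ∫ v : E3, ∫ w : E3, ∫ σ : S2, T (v, w, σ) := by
  have hT' : Integrable T
      ((volume : Measure E3).prod ((volume : Measure E3).prod (volume : Measure S2))) := hT
  have h1 := integral_prod T hT'
  refine Eq.trans h1 (integral_congr_ae ?_)
  filter_upwards [hT'.prod_right_ae] with v hv
  exact integral_prod (fun q : E3 × S2 => T (v, q)) hv

lemma integral_cosTheta {bf : ℝ → ℝ} (hbf : gradCutoff bf) {v w : E3} (h : v - w ≠ 0) :
    ∫ σ : S2, bf (cosTheta v w σ) = ∫ σ : S2, bf (cos1 σ) := by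
  have m1 : Measurable fun σ : S2 => bf (cosTheta v w σ) := by
    have hp : Measurable fun σ : S2 => (v - w, σ) := measurable_prodMk_left
    exact hbf.1.comp (measurable_cosR.comp hp)
  have m2 : Measurable fun σ : S2 => bf (cos1 σ) := hbf.1.comp measurable_cos1
  rw [integral_eq_lintegral_of_nonneg_ae (Filter.Eventually.of_forall fun σ => hbf.2.1 _)
      m1.aestronglyMeasurable,
    integral_eq_lintegral_of_nonneg_ae (Filter.Eventually.of_forall fun σ => hbf.2.1 _)
      m2.aestronglyMeasurable]
  congr 1
  exact lintegral_cosR (fun t => ENNReal.ofReal (bf t)) hbf.1.ennreal_ofReal (v - w) h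

lemma cosHalf1_nonneg (σ : S2) : 0 ≤ cosHalf1 σ := Real.sqrt_nonneg _

lemma integrable_bf {bf : ℝ → ℝ} (hbf : gradCutoff bf) {q : ℝ} (hq : 0 ≤ q) :
    Integrable fun σ : S2 => bf (cos1 σ) * cosHalf1 σ ^ q := by
  obtain ⟨L, hL, hb⟩ := bf_le hbf
  have m1 : Measurable fun σ : S2 => bf (cos1 σ) := hbf.1.comp measurable_cos1
  have m2 : Measurable fun σ : S2 => cosHalf1 σ := measurable_cH.comp measurable_cos1
  refine Integrable.of_bound (m1.mul (m2.pow_const q)).aestronglyMeasurable L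
    (Filter.Eventually.of_forall fun σ => ?_)
  have h1 : cosHalf1 σ ^ q ≤ 1 :=
    rpow_le_one (cosHalf1_nonneg σ) (cH_le_one (cos1_le_one σ)) hq
  have h0 : 0 ≤ cosHalf1 σ ^ q := rpow_nonneg (cosHalf1_nonneg σ) q
  rw [Real.norm_of_nonneg (mul_nonneg (hbf.2.1 _) h0)]
  calc bf (cos1 σ) * cosHalf1 σ ^ q ≤ L * 1 :=
        mul_le_mul (hb _ (cos1_le_one σ)) h1 h0 hL.le
    _ = L := mul_one L

/-- The integrand of the loss part of `∫ Q(μ, f) f ⟨v⟩^{2k}`. -/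
def lossL (γ k : ℝ) (bf : ℝ → ℝ) (f : E3 → ℝ) (v w : E3) (σ : S2) : ℝ :=
  ‖v - w‖ ^ γ * bf (cosTheta v w σ) * maxw w * f v * f v * jap v ^ (2 * k)

lemma integral_loss (γ k : ℝ) {bf : ℝ → ℝ} (hbf : gradCutoff bf) {f : E3 → ℝ}
    (hL : Integrable fun p : E3 × E3 × S2 => lossL γ k bf f p.1 p.2.1 p.2.2) :
    ∫ p : E3 × E3 × S2, lossL γ k bf f p.1 p.2.1 p.2.2 =
      (∫ σ : S2, bf (cos1 σ)) * starSq γ k f := by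
  rw [integral_triple hL, starSq, ← integral_const_mul]
  congr 1; ext v
  rw [← integral_const_mul]
  refine integral_congr_ae ?_
  -- for `w = v` the angle is undefined, and `cosTheta` is identically `0`
  have hne : ∀ᵐ w : E3, w ≠ v := compl_mem_ae_iff.2 (measure_singleton v)
  filter_upwards [hne] with w hw
  have e : ∀ σ : S2, lossL γ k bf f v w σ =
      bf (cosTheta v w σ) * (maxw w * ‖v - w‖ ^ γ * f v ^ 2 * jap v ^ (2 * k)) := by
    intro σ; unfold lossL; ring
  simp_rw [e]
  rw [integral_mul_const, integral_cosTheta hbf (sub_ne_zero.2 hw.symm)]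

lemma integral_Qcol (γ k : ℝ) {bf : ℝ → ℝ} {f : E3 → ℝ}
    (hG : Integrable fun p : E3 × E3 × S2 => gainG γ k bf f p.1 p.2.1 p.2.2)
    (hL : Integrable fun p : E3 × E3 × S2 => lossL γ k bf f p.1 p.2.1 p.2.2) :
    ∫ v : E3, Qcol γ bf maxw f v * f v * jap v ^ (2 * k) =
      (∫ p : E3 × E3 × S2, gainG γ k bf f p.1 p.2.1 p.2.2) -
        ∫ p : E3 × E3 × S2, lossL γ k bf f p.1 p.2.1 p.2.2 := by
  rw [← integral_sub hG hL]
  have hi : Integrable fun p : E3 × E3 × S2 =>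
    gainG γ k bf f p.1 p.2.1 p.2.2 - lossL γ k bf f p.1 p.2.1 p.2.2 := hG.sub hL
  rw [integral_triple hi]
  congr 1; ext v
  rw [Qcol, mul_assoc, ← integral_mul_const]
  congr 1; ext w
  rw [← integral_mul_const]
  congr 1; ext σ
  unfold gainG lossL
  ring

lemma lintegral_star (γ k : ℝ) {f : E3 → ℝ} (hf : Measurable f)
    (hS : Integrable (fun p : E3 × E3 =>
        maxw p.2 * ‖p.1 - p.2‖ ^ γ * f p.1 ^ 2 * jap p.1 ^ (2 * k))) :
    ∫⁻ v : E3, ENNReal.ofReal (f v ^ 2 * jap v ^ (2 * k)) *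
      kconv γ (fun w => ENNReal.ofReal (maxw w)) v = ENNReal.ofReal (starSq γ k f) := by
  have hS' : Integrable (fun p : E3 × E3 =>
        maxw p.2 * ‖p.1 - p.2‖ ^ γ * f p.1 ^ 2 * jap p.1 ^ (2 * k))
        ((volume : Measure E3).prod (volume : Measure E3)) := hS
  have mj := measurable_jap
  have mm := measurable_maxw
  have hn : ∀ p : E3 × E3, 0 ≤ maxw p.2 * ‖p.1 - p.2‖ ^ γ * f p.1 ^ 2 * jap p.1 ^ (2 * k) := by
    intro p
    have := (maxw_pos p.2).le
    have := (jap_pos p.1).le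
    positivity
  have e1 : starSq γ k f = ∫ p : E3 × E3,
      maxw p.2 * ‖p.1 - p.2‖ ^ γ * f p.1 ^ 2 * jap p.1 ^ (2 * k)
        ∂((volume : Measure E3).prod (volume : Measure E3)) := (integral_prod _ hS').symm
  have mT : Measurable fun p : E3 × E3 =>
      ENNReal.ofReal (maxw p.2 * ‖p.1 - p.2‖ ^ γ * f p.1 ^ 2 * jap p.1 ^ (2 * k)) := by fun_prop
  rw [e1, ofReal_integral_eq_lintegral_ofReal hS' (Filter.Eventually.of_forall hn),
    lintegral_prod _ mT.aemeasurable]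
  congr 1; ext v
  have mw : Measurable fun w : E3 => ENNReal.ofReal (‖v - w‖ ^ γ) * ENNReal.ofReal (maxw w) := by
    fun_prop
  rw [kconv, ← lintegral_const_mul _ mw]
  congr 1; ext w
  have := (maxw_pos w).le
  have := (jap_pos v).le
  rw [← ENNReal.ofReal_mul (by positivity), ← ENNReal.ofReal_mul (by positivity)]
  congr 1
  ring

/-- The real-valued form of `gain_bound`, with the error term evaluated by `conv_bound`. -/
lemma integral_gain_le (γ k : ℝ) (hγ : -3 < γ) (hγ2 : γ ≤ 1) (hk : 4 ≤ k) {bf : ℝ → ℝ}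
    (hbf : gradCutoff bf) : ∃ C : ℝ, 0 ≤ C ∧ ∀ f : E3 → ℝ, Measurable f →
      Integrable (fun p : E3 × E3 × S2 => gainG γ k bf f p.1 p.2.1 p.2.2) →
      Integrable (fun p : E3 × E3 =>
        maxw p.2 * ‖p.1 - p.2‖ ^ γ * f p.1 ^ 2 * jap p.1 ^ (2 * k)) →
      Integrable (fun v : E3 => f v ^ 2 * jap v ^ (2 * (k + γ / 2 - 1 / 2))) →
      ∫ p : E3 × E3 × S2, gainG γ k bf f p.1 p.2.1 p.2.2 ≤
        (∫ σ : S2, bf (cos1 σ) * cosHalf1 σ ^ (k - (3 + γ) / 2)) * starSq γ k f +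
          C * wSqR (k + γ / 2 - 1 / 2) f := by
  obtain ⟨C₀, hC₀, hconv⟩ := conv_bound γ (k + 1 / 2) hγ
  have hA := angC_lt_top γ k hγ hk hbf
  refine ⟨(angC γ k bf * C₀).toReal, ENNReal.toReal_nonneg, fun f hf hG hS hW => ?_⟩
  have mj := measurable_jap
  set M := ∫ σ : S2, bf (cos1 σ) * cosHalf1 σ ^ (k - (3 + γ) / 2) with hM
  have hn : ∀ σ : S2, 0 ≤ bf (cos1 σ) * cosHalf1 σ ^ (k - (3 + γ) / 2) := fun σ =>
    mul_nonneg (hbf.2.1 _) (rpow_nonneg (cosHalf1_nonneg σ) _)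
  have hM0 : 0 ≤ M := integral_nonneg hn
  have eM : ∫⁻ σ : S2, ENNReal.ofReal (bf (cos1 σ) * cosHalf1 σ ^ (k - (3 + γ) / 2)) =
      ENNReal.ofReal M :=
    (ofReal_integral_eq_lintegral_ofReal (integrable_bf hbf (by linarith))
      (Filter.Eventually.of_forall hn)).symm
  have hS0 : 0 ≤ starSq γ k f := by
    refine integral_nonneg fun v => integral_nonneg fun w => ?_
    have := (maxw_pos w).le
    have := (jap_pos v).le
    positivity
  have hWn : ∀ v : E3, 0 ≤ f v ^ 2 * jap v ^ (2 * (k + γ / 2 - 1 / 2)) := fun v => by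
    have := (jap_pos v).le
    positivity
  have hW0 : 0 ≤ wSqR (k + γ / 2 - 1 / 2) f := integral_nonneg hWn
  have herr : ∫⁻ v : E3, ENNReal.ofReal (f v ^ 2 * jap v ^ (2 * k - 1)) *
        kconv γ (fun w => ENNReal.ofReal (maxw w * jap w ^ (k + 1 / 2))) v ≤
      C₀ * ENNReal.ofReal (wSqR (k + γ / 2 - 1 / 2) f) := by
    rw [wSqR, ofReal_integral_eq_lintegral_ofReal hW (Filter.Eventually.of_forall hWn)]
    have mW : Measurable fun v : E3 =>
      ENNReal.ofReal (f v ^ 2 * jap v ^ (2 * (k + γ / 2 - 1 / 2))) := by fun_prop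
    rw [← lintegral_const_mul _ mW]
    refine lintegral_mono fun v => ?_
    have hj := jap_pos v
    refine (mul_le_mul_right (hconv v) _).trans (le_of_eq ?_)
    rw [mul_left_comm, ← ENNReal.ofReal_mul (by positivity), mul_assoc (f v ^ 2), ← rpow_add hj]
    congr 4
    ring
  have hb := gain_bound γ k hk hbf hf
  have mG : Measurable fun p : E3 × E3 × S2 =>
      ENNReal.ofReal |gainG γ k bf f p.1 p.2.1 p.2.2| := by
    have mm := measurable_maxw
    have mct := measurable_cosTheta
    have mvP := measurable_vP
    have mvsP := measurable_vsP
    have mb := hbf.1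
    unfold gainG; fun_prop
  have it := lintegral_triple _ mG
  dsimp only at it
  rw [it, eM, lintegral_star γ k hf hS] at hb
  have hb2 := hb.trans (add_le_add le_rfl (mul_le_mul_right herr (angC γ k bf)))
  rw [← ofReal_integral_eq_lintegral_ofReal hG.abs
    (Filter.Eventually.of_forall fun p => abs_nonneg _), ← mul_assoc,
    ← ENNReal.ofReal_toReal (ENNReal.mul_lt_top hA hC₀).ne, ← ENNReal.ofReal_mul hM0,
    ← ENNReal.ofReal_mul ENNReal.toReal_nonneg, ← ENNReal.ofReal_add (by positivity)
      (mul_nonneg ENNReal.toReal_nonneg hW0)] at hb2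
  have h3 := (ENNReal.ofReal_le_ofReal_iff (add_nonneg (mul_nonneg hM0 hS0)
    (mul_nonneg ENNReal.toReal_nonneg hW0))).1 hb2
  exact (integral_mono hG hG.abs fun p => le_abs_self _).trans h3

/-- coercivity-type estimate of (Q(μ,f), f⟨v⟩^{2k}) for -3 < γ ≤ 1, k ≥ 4. -/
theorem stmt11 (γ k : ℝ) (hγ1 : -3 < γ) (hγ2 : γ ≤ 1) (hk : 4 ≤ k)
    (bf : ℝ → ℝ) (hbf : gradCutoff bf) :
    ∃ C : ℝ, 0 < C ∧ ∀ f : E3 → ℝ, Measurable f →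
      -- absolute convergence of the gain part of the triple integral
      Integrable (fun p : E3 × E3 × S2 =>
        ‖p.1 - p.2.1‖ ^ γ * bf (cosTheta p.1 p.2.1 p.2.2) *
          maxw (vsP p.1 p.2.1 p.2.2) * f (vP p.1 p.2.1 p.2.2) * f p.1 * jap p.1 ^ (2 * k)) →
      -- absolute convergence of the loss part of the triple integral
      Integrable (fun p : E3 × E3 × S2 =>
        ‖p.1 - p.2.1‖ ^ γ * bf (cosTheta p.1 p.2.1 p.2.2) *
          maxw p.2.1 * f p.1 * f p.1 * jap p.1 ^ (2 * k)) →
      -- convergence of the star norm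
      Integrable (fun p : E3 × E3 =>
        maxw p.2 * ‖p.1 - p.2‖ ^ γ * f p.1 ^ 2 * jap p.1 ^ (2 * k)) →
      -- convergence of the weighted L² norm
      Integrable (fun v : E3 => f v ^ 2 * jap v ^ (2 * (k + γ / 2 - 1 / 2))) →
      (∫ v : E3, Qcol γ bf maxw f v * f v * jap v ^ (2 * k)) ≤
        -(∫ σ : S2, bf (cos1 σ) * (1 - cosHalf1 σ ^ (k - (3 + γ) / 2))) * starSq γ k f +
          C * wSqR (k + γ / 2 - 1 / 2) f := by
  obtain ⟨C, hC, h⟩ := integral_gain_le γ k hγ1 hγ2 hk hbf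
  refine ⟨C + 1, by linarith, fun f hf hG hL hS hW => ?_⟩
  have hG' : Integrable (fun p : E3 × E3 × S2 => gainG γ k bf f p.1 p.2.1 p.2.2) := hG
  have hL' : Integrable (fun p : E3 × E3 × S2 => lossL γ k bf f p.1 p.2.1 p.2.2) := hL
  have h1 := h f hf hG' hS hW
  rw [integral_Qcol γ k hG' hL', integral_loss γ k hbf hL']
  have hW0 : 0 ≤ wSqR (k + γ / 2 - 1 / 2) f := integral_nonneg fun v => by
    have := (jap_pos v).le
    positivity
  have i1 : Integrable fun σ : S2 => bf (cos1 σ) := by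
    simpa using integrable_bf hbf (q := 0) le_rfl
  have i2 : Integrable fun σ : S2 => bf (cos1 σ) * cosHalf1 σ ^ (k - (3 + γ) / 2) :=
    integrable_bf hbf (by linarith)
  have h2 : ∫ σ : S2, bf (cos1 σ) * (1 - cosHalf1 σ ^ (k - (3 + γ) / 2)) =
      (∫ σ : S2, bf (cos1 σ)) - ∫ σ : S2, bf (cos1 σ) * cosHalf1 σ ^ (k - (3 + γ) / 2) := by
    rw [← integral_sub i1 i2]
    congr 1; ext σ
    ring
  rw [h2]
  linarith

end
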